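/- arXiv:1906.12056 — 2 statements merged into one kernel-verified Lean document; each statement's English description precedes it below -/
import Mathlib

section
/- For every σ > 0 and every integer d ≥ 1, the quantity β := (1/d)·Σ_{j=0}^{d−1} 1/(1 + 2σ − 2σ·cos(2πj/d))² satisfies β = (2ω^{2d+1} − ξω^{2d} + 2ξdω^d − 2ω + ξ) / (σ²·ξ³·(1 − ω^d)²). -/
/-- If `w ^ d ≠ 1`, then `w z ≠ 1` for every power `z` of a `d`-th root of unity. -/
theorem one_sub_mul_pow_ne_zero {w ζ : ℂ} {d : ℕ} (hζ : ζ ^ d = 1) (hw : w ^ d ≠ 1) (j : ℕ) :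
    1 - w * ζ ^ j ≠ 0 := by
  refine fun h ↦ hw ?_
  have h1 := congrArg (· ^ d) (sub_eq_zero.mp h)
  simp only [one_pow, mul_pow] at h1
  rwa [← pow_mul, mul_comm j d, pow_mul, hζ, one_pow, mul_one, eq_comm] at h1

open Finset in
/-- Averaging the geometric series over the `d`-th roots of unity. -/
theorem IsPrimitiveRoot.sum_inv_one_sub_mul_pow {ζ : ℂ} {d : ℕ} (hζ : IsPrimitiveRoot ζ d)
    (hd : 1 ≤ d) {w : ℂ} (hw : w ^ d ≠ 1) :
    ∑ j ∈ range d, (1 - w * ζ ^ j)⁻¹ = d / (1 - w ^ d) := by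
  have hpow (j : ℕ) : (w * ζ ^ j) ^ d = w ^ d := by
    rw [mul_pow, ← pow_mul, mul_comm j d, pow_mul, hζ.pow_eq_one, one_pow, mul_one]
  have hq : 1 - w ^ d ≠ 0 := sub_ne_zero.mpr hw.symm
  have hterm (j : ℕ) : (1 - w * ζ ^ j)⁻¹ =
      (∑ k ∈ range d, w ^ k * (ζ ^ k) ^ j) / (1 - w ^ d) := by
    have hne := one_sub_mul_pow_ne_zero hζ.pow_eq_one hw j
    rw [eq_div_iff hq, inv_mul_eq_iff_eq_mul₀ hne, ← hpow j, ← mul_neg_geom_sum]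
    congr 1
    refine sum_congr rfl fun k _ ↦ ?_
    rw [mul_pow, ← pow_mul, ← pow_mul, mul_comm j k]
  simp_rw [hterm]
  rw [← sum_div, sum_comm]
  congr 1
  rw [sum_eq_single_of_mem 0 (mem_range.mpr hd)]
  · simp
  · intro k hk hk0
    rw [← mul_sum]
    have h1 : ζ ^ k ≠ 1 := hζ.pow_ne_one_of_pos_of_lt hk0 (mem_range.mp hk)
    rw [geom_sum_eq h1, ← pow_mul, mul_comm k d, pow_mul, hζ.pow_eq_one]
    simp

open Finset in
theorem IsPrimitiveRoot.sum_inv_one_sub_mul_pow_sq {ζ : ℂ} {d : ℕ} (hζ : IsPrimitiveRoot ζ d)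
    (hd : 1 ≤ d) {w : ℂ} (hw : w ^ d ≠ 1) :
    ∑ j ∈ range d, ((1 - w * ζ ^ j)⁻¹) ^ 2 =
      d / (1 - w ^ d) + d ^ 2 * w ^ d / (1 - w ^ d) ^ 2 := by
  have hq : 1 - w ^ d ≠ 0 := sub_ne_zero.mpr hw.symm
  have hne := one_sub_mul_pow_ne_zero hζ.pow_eq_one hw
  have hleft : HasDerivAt (fun x : ℂ ↦ ∑ j ∈ range d, (1 - x * ζ ^ j)⁻¹)
      (∑ j ∈ range d, ζ ^ j / (1 - w * ζ ^ j) ^ 2) w := by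
    refine HasDerivAt.fun_sum fun j _ ↦ ?_
    have := ((((hasDerivAt_id w).mul_const (ζ ^ j)).const_sub 1).fun_inv (hne j))
    simpa using this
  have hright : HasDerivAt (fun x : ℂ ↦ (d : ℂ) / (1 - x ^ d))
      (d * (d * w ^ (d - 1)) / (1 - w ^ d) ^ 2) w := by
    have := (hasDerivAt_const w (d : ℂ)).fun_div ((hasDerivAt_pow d w).const_sub 1) hq
    simpa using this
  have hev : (fun x : ℂ ↦ ∑ j ∈ range d, (1 - x * ζ ^ j)⁻¹) =ᶠ[nhds w]
      fun x ↦ (d : ℂ) / (1 - x ^ d) := by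
    filter_upwards [(continuous_pow d).continuousAt.eventually_ne hw] with x hx
    exact hζ.sum_inv_one_sub_mul_pow hd hx
  have hderiv := hleft.unique (hright.congr_of_eventuallyEq hev)
  have hterm (j : ℕ) : ((1 - w * ζ ^ j)⁻¹) ^ 2 =
      (1 - w * ζ ^ j)⁻¹ + w * (ζ ^ j / (1 - w * ζ ^ j) ^ 2) := by
    field_simp [hne j]
    ring
  simp_rw [hterm]
  rw [sum_add_distrib, ← mul_sum, hderiv, hζ.sum_inv_one_sub_mul_pow hd hw]
  obtain ⟨n, rfl⟩ : ∃ n, d = n + 1 := ⟨d - 1, by omega⟩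
  simp only [Nat.add_sub_cancel]
  ring

open Finset in
/-- The mean over the `d`-th roots of unity `z` of `1 / |1 - w z| ^ 4`, for real `w`. -/
theorem sum_inv_poisson_sq {w : ℝ} (hw0 : 0 < w) (hw1 : w < 1) {d : ℕ} (hd : 1 ≤ d) :
    ∑ j ∈ range d, 1 / (1 + w ^ 2 - 2 * w * Real.cos (2 * Real.pi * j / d)) ^ 2 =
      d * ((1 + w ^ 2) * (1 - w ^ (2 * d)) + 2 * d * w ^ d * (1 - w ^ 2)) /
        ((1 - w ^ 2) ^ 3 * (1 - w ^ d) ^ 2) := by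
  have hζ := Complex.isPrimitiveRoot_exp d (by omega)
  set ζ := Complex.exp (2 * Real.pi * Complex.I / d) with hζdef
  have hwd : w ^ d < 1 := pow_lt_one₀ hw0.le hw1 (by omega)
  have hq : (w : ℂ) ^ d ≠ 1 := mod_cast hwd.ne
  have hq' : (1 : ℂ) - (w : ℂ) ^ d ≠ 0 := sub_ne_zero.mpr hq.symm
  have hw2 : (1 : ℂ) - (w : ℂ) ^ 2 ≠ 0 :=
    sub_ne_zero.mpr (by exact_mod_cast (pow_lt_one₀ hw0.le hw1 two_ne_zero).ne')
  have hterm (j : ℕ) :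
      (1 / (1 + (w : ℂ) ^ 2 - 2 * w * Complex.cos (2 * Real.pi * j / d)) ^ 2 : ℂ) =
      (((1 - w * ζ ^ j)⁻¹) ^ 2 + ((1 - w * ζ⁻¹ ^ j)⁻¹) ^ 2 + 1
        - 2 * (1 - w * ζ ^ j)⁻¹ - 2 * (1 - w * ζ⁻¹ ^ j)⁻¹
        + 2 * (((1 - w * ζ ^ j)⁻¹ + (1 - w * ζ⁻¹ ^ j)⁻¹ - 1) / (1 - (w : ℂ) ^ 2)))
        / (1 - (w : ℂ) ^ 2) ^ 2 := by
    have hA := one_sub_mul_pow_ne_zero hζ.pow_eq_one hq j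
    have hB := one_sub_mul_pow_ne_zero hζ.inv.pow_eq_one hq j
    have hzz : ζ ^ j * ζ⁻¹ ^ j = 1 := by
      rw [← mul_pow, mul_inv_cancel₀ (Complex.exp_ne_zero _), one_pow]
    have hcos : 2 * Complex.cos (2 * Real.pi * j / d) = ζ ^ j + ζ⁻¹ ^ j := by
      rw [Complex.two_cos, hζdef, ← Complex.exp_neg, ← Complex.exp_nat_mul, ← Complex.exp_nat_mul]
      congr 2 <;> ring
    have hden : 1 + (w : ℂ) ^ 2 - 2 * w * Complex.cos (2 * Real.pi * j / d) =
        (1 - w * ζ ^ j) * (1 - w * ζ⁻¹ ^ j) := by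
      linear_combination (-(w : ℂ)) * hcos - (w : ℂ) ^ 2 * hzz
    rw [hden]
    have hAB : (1 - (w : ℂ) * ζ ^ j)⁻¹ * (1 - w * ζ⁻¹ ^ j)⁻¹ =
        ((1 - w * ζ ^ j)⁻¹ + (1 - w * ζ⁻¹ ^ j)⁻¹ - 1) / (1 - (w : ℂ) ^ 2) := by
      generalize ζ ^ j = z at *
      generalize ζ⁻¹ ^ j = y at *
      rw [eq_div_iff hw2]
      field_simp
      linear_combination (w : ℂ) ^ 2 * hzz
    rw [one_div, ← inv_pow, mul_inv, eq_div_iff (pow_ne_zero 2 hw2), ← hAB]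
    generalize (1 - (w : ℂ) * ζ ^ j)⁻¹ = A at *
    generalize (1 - (w : ℂ) * ζ⁻¹ ^ j)⁻¹ = B at *
    rw [eq_div_iff hw2] at hAB
    linear_combination (A * B * (1 - (w : ℂ) ^ 2) + (A + B - 1)) * hAB
  rw [← Complex.ofReal_inj]
  push_cast
  simp_rw [hterm]
  simp only [← sum_div, sum_add_distrib, sum_sub_distrib, ← mul_sum]
  rw [hζ.sum_inv_one_sub_mul_pow_sq hd hq, hζ.inv.sum_inv_one_sub_mul_pow_sq hd hq,
    hζ.sum_inv_one_sub_mul_pow hd hq, hζ.inv.sum_inv_one_sub_mul_pow hd hq]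
  simp only [sum_const, card_range, nsmul_eq_mul, mul_one]
  rw [mul_comm 2 d, pow_mul]
  field_simp
  ring

/-- For every `σ > 0` and every integer `d ≥ 1`, the quantity
`β = (1/d) ∑_{j=0}^{d-1} 1/(1 + 2σ - 2σ cos(2πj/d))²` satisfies
`β = (2ω^{2d+1} - ξω^{2d} + 2ξdω^d - 2ω + ξ)/(σ²ξ³(1 - ω^d)²)`, where
`ω = (2σ+1-√(4σ+1))/(2σ)` and `ξ = -√(1+4σ)/σ`. -/
theorem beta_closed_form (σ : ℝ) (hσ : 0 < σ) (d : ℕ) (hd : 1 ≤ d) :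
    let ω : ℝ := (2 * σ + 1 - Real.sqrt (4 * σ + 1)) / (2 * σ)
    let ξ : ℝ := -Real.sqrt (1 + 4 * σ) / σ
    (1 / d : ℝ) * ∑ j : Fin d, 1 / (1 + 2 * σ - 2 * σ * Real.cos (2 * Real.pi * j.val / d)) ^ 2
      = (2 * ω ^ (2 * d + 1) - ξ * ω ^ (2 * d) + 2 * ξ * d * ω ^ d - 2 * ω + ξ) /
          (σ ^ 2 * ξ ^ 3 * (1 - ω ^ d) ^ 2) := by
  intro ω ξ
  have hs2 : Real.sqrt (4 * σ + 1) ^ 2 = 4 * σ + 1 := Real.sq_sqrt (by positivity)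
  have hs0 : 0 ≤ Real.sqrt (4 * σ + 1) := Real.sqrt_nonneg _
  have hω : ω = (2 * σ + 1 - Real.sqrt (4 * σ + 1)) / (2 * σ) := rfl
  have hξ : ξ = -Real.sqrt (4 * σ + 1) / σ := by rw [add_comm (4 * σ) 1]
  clear_value ω ξ
  generalize Real.sqrt (4 * σ + 1) = s at *
  have hω0 : 0 < ω := by
    rw [hω]
    have : s < 2 * σ + 1 := by nlinarith
    exact div_pos (by linarith) (by linarith)
  have hω1 : ω < 1 := by
    rw [hω, div_lt_one (by linarith)]
    nlinarith
  have hquad : σ * (1 + ω ^ 2) = (1 + 2 * σ) * ω := by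
    rw [hω]
    field_simp
    linear_combination hs2
  have hξω : ξ = (ω ^ 2 - 1) / ω := by
    rw [eq_div_iff hω0.ne', hξ, hω]
    field_simp
    linear_combination hs2
  have hterm (j : ℕ) : 1 / (1 + 2 * σ - 2 * σ * Real.cos (2 * Real.pi * j / d)) ^ 2 =
      (ω / σ) ^ 2 * (1 / (1 + ω ^ 2 - 2 * ω * Real.cos (2 * Real.pi * j / d)) ^ 2) := by
    have : 1 + 2 * σ - 2 * σ * Real.cos (2 * Real.pi * j / d) =
        (ω / σ)⁻¹ * (1 + ω ^ 2 - 2 * ω * Real.cos (2 * Real.pi * j / d)) := by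
      field_simp
      linear_combination -hquad
    rw [this, mul_pow, inv_pow, one_div, mul_inv, inv_inv, one_div]
  rw [Fin.sum_univ_eq_sum_range
    (fun j ↦ 1 / (1 + 2 * σ - 2 * σ * Real.cos (2 * Real.pi * j / d)) ^ 2) d]
  simp_rw [hterm]
  rw [← Finset.mul_sum, sum_inv_poisson_sq hω0 hω1 hd, hξω, pow_succ ω (2 * d), mul_comm 2 d,
    pow_mul]
  have hd0 : (d : ℝ) ≠ 0 := by positivity
  have hq : 1 - ω ^ d ≠ 0 := (sub_pos.mpr (pow_lt_one₀ hω0.le hω1 (by omega))).ne'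
  have hw2 : 1 - ω ^ 2 ≠ 0 := (sub_pos.mpr (pow_lt_one₀ hω0.le hω1 two_ne_zero)).ne'
  rw [← neg_sub 1 (ω ^ 2)]
  field_simp
  ring
end

section
/- (Privacy guarantee for DP-LSSGD.) Let ε > 0, δ > 0, and suppose there exists μ ∈ (0,1) such that, with α := log(1/δ)/((1−μ)ε) + 1, one has α ≤ log( μn³ε / (5b³Tα + μbn²ε) ) and 5b²Tα/(μn²ε) ≥ 3/2. Let S = (f₁,…,f_n) and S′ = (f′₁,…,f′_n) be two families of differentiable G-Lipschitz functions ℝ^d → ℝ that differ in exactly one index. Run DP-LSSGD for T iterations from the same initial point w⁰ on each dataset, with the same step sizes and with per-coordinate Gaussian noise variance ν² = 20TαG²/(μn²ε): w^{k+1} = w^k − η_k · A_σ^{-1}( (1/b)·Σ_{i∈B_k} ∇f_i(w^k) + n_k ), where the B_k are independent uniformly random size-b subsets of {1,…,n} and the n_k are independent N(0, ν²I_d) Gaussian vectors, all independent of each other. Then the final iterate is (ε, δ)-differentially private: for every Borel set O ⊆ ℝ^d, P[w^T computed from S ∈ O] ≤ e^ε · P[w^T computed from S′ ∈ O] + δ.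 -/
open Matrix MeasureTheory ProbabilityTheory
open scoped ENNReal NNReal

/-- The circulant matrix `A_σ = I - σL`, where `L` is the one-dimensional discrete
Laplacian with periodic boundary conditions. -/
noncomputable def lapMat (σ : ℝ) (d : ℕ) : Matrix (Fin d) (Fin d) ℝ :=
  Matrix.of fun j k =>
    if j = k then 1 + 2 * σ
    else if (j.val + 1) % d = k.val ∨ (k.val + 1) % d = j.val then -σ
    else 0

instance (n : ℕ) : MeasurableSpace (Finset (Fin n)) := ⊤

/-- The uniform distribution on size-`b` subsets of `{1,…,n}`. -/
noncomputable def batchMeasure (n b : ℕ) : Measure (Finset (Fin n)) :=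
  ((Finset.powersetCard b (Finset.univ : Finset (Fin n))).card : ℝ≥0∞)⁻¹ •
    ∑ B ∈ Finset.powersetCard b (Finset.univ : Finset (Fin n)), Measure.dirac B

/-- The isotropic Gaussian measure `N(0, ν²I_d)` on `ℝ^d`. -/
noncomputable def noiseMeasure (d : ℕ) (ν : ℝ) : Measure (EuclideanSpace ℝ (Fin d)) :=
  (Measure.pi fun _ : Fin d => gaussianReal 0 (Real.toNNReal (ν ^ 2))).map
    (EuclideanSpace.equiv (Fin d) ℝ).symm

section GaussianShift

/-- The density of a one-dimensional Gaussian of mean `u` with respect to the centered one. -/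
theorem gaussianReal_eq_withDensity {v : ℝ≥0} (hv : v ≠ 0) (u : ℝ) :
    gaussianReal u v = (gaussianReal 0 v).withDensity
      fun x => ENNReal.ofReal (Real.exp (x * u / v - u ^ 2 / (2 * v))) := by
  have hv' : (v : ℝ) ≠ 0 := by exact_mod_cast hv
  rw [gaussianReal_of_var_ne_zero _ hv, gaussianReal_of_var_ne_zero _ hv,
    ← withDensity_mul _ (measurable_gaussianPDF 0 v) (by fun_prop)]
  congr 1
  ext x
  simp only [Pi.mul_apply, gaussianPDF]
  rw [← ENNReal.ofReal_mul (gaussianPDFReal_nonneg _ _ _)]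
  simp only [gaussianPDFReal]
  rw [mul_assoc _ (Real.exp _) (Real.exp _), ← Real.exp_add]
  congr 3
  field_simp
  ring

theorem pi_withDensity {ι : Type*} [Fintype ι] {X : ι → Type*} [∀ i, MeasurableSpace (X i)]
    (m : ∀ i, Measure (X i)) [∀ i, IsProbabilityMeasure (m i)] (g : ∀ i, X i → ℝ≥0∞)
    (hg : ∀ i, Measurable (g i)) [∀ i, SigmaFinite ((m i).withDensity (g i))] :
    Measure.pi (fun i => (m i).withDensity (g i)) =
      (Measure.pi m).withDensity fun x => ∏ i, g i (x i) := by
  refine Measure.pi_eq fun s hs => ?_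
  rw [withDensity_apply _ (MeasurableSet.univ_pi hs),
    ← lintegral_indicator (MeasurableSet.univ_pi hs)]
  have hind : ∀ x : ∀ i, X i, (Set.univ.pi s).indicator (fun x => ∏ i, g i (x i)) x =
      ∏ i, (s i).indicator (g i) (x i) := by
    intro x
    by_cases hx : x ∈ Set.univ.pi s
    · rw [Set.indicator_of_mem hx]
      exact Finset.prod_congr rfl fun i _ => (Set.indicator_of_mem (hx i trivial) _).symm
    · rw [Set.indicator_of_notMem hx]
      simp only [Set.mem_pi, Set.mem_univ, true_imp_iff, not_forall] at hx
      obtain ⟨i, hi⟩ := hx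
      exact (Finset.prod_eq_zero (Finset.mem_univ i) (Set.indicator_of_notMem hi _)).symm
  simp_rw [hind]
  have hmeas : ∀ i, Measurable ((s i).indicator (g i)) := fun i => (hg i).indicator (hs i)
  rw [lintegral_prod_eq_prod_lintegral_of_indepFun Finset.univ
    (fun i (x : ∀ i, X i) => (s i).indicator (g i) (x i))
    (iIndepFun_pi fun i => (hmeas i).aemeasurable)
    (fun i => (hmeas i).comp (measurable_pi_apply i))]
  refine Finset.prod_congr rfl fun i _ => ?_
  rw [withDensity_apply _ (hs i), ← lintegral_indicator (hs i),
    (measurePreserving_eval m i).lintegral_comp (hmeas i)]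

instance isProbabilityMeasure_noiseMeasure (d : ℕ) (ν : ℝ) :
    IsProbabilityMeasure (noiseMeasure d ν) := by
  unfold noiseMeasure
  exact Measure.isProbabilityMeasure_map
    (EuclideanSpace.equiv (Fin d) ℝ).symm.continuous.measurable.aemeasurable

/-- The Cameron–Martin formula for a measure behaving like a centered Gaussian of variance `v`
in each direction. -/
def HasGaussianShift {E : Type*} [NormedAddCommGroup E] [InnerProductSpace ℝ E]
    [MeasurableSpace E] (N : Measure E) (v : ℝ) : Prop :=
  ∀ (u : E) (h : E → ℝ≥0∞), Measurable h →
    ∫⁻ z, h (z + u) ∂N =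
      ∫⁻ z, h z * ENNReal.ofReal (Real.exp (inner ℝ z u / v - ‖u‖ ^ 2 / (2 * v))) ∂N

theorem hasGaussianShift_noiseMeasure (d : ℕ) {ν : ℝ} (hν : 0 < ν ^ 2) :
    HasGaussianShift (noiseMeasure d ν) (ν ^ 2) := by
  intro u h hh
  set v : ℝ≥0 := Real.toNNReal (ν ^ 2) with hv
  have hv0 : v ≠ 0 := (Real.toNNReal_pos.2 hν).ne'
  have hvc : (v : ℝ) = ν ^ 2 := Real.coe_toNNReal _ hν.le
  set e := (EuclideanSpace.equiv (Fin d) ℝ).symm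
  have he : Measurable e := e.continuous.measurable
  have hi : ∀ x : Fin d → ℝ, inner ℝ (e x) u / ν ^ 2 - ‖u‖ ^ 2 / (2 * ν ^ 2) =
      ∑ i, (x i * u i / v - u i ^ 2 / (2 * v)) := by
    intro x
    rw [Finset.sum_sub_distrib, ← Finset.sum_div, ← Finset.sum_div, hvc,
      EuclideanSpace.norm_sq_eq]
    simp only [Real.norm_eq_abs, sq_abs]
    congr 2
    simp [PiLp.inner_apply, e, mul_comm]
  have hmap : (Measure.pi fun _ : Fin d => gaussianReal 0 v).map (fun x i => x i + u i) =
      (Measure.pi fun _ : Fin d => gaussianReal 0 v).withDensity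
        fun x => ∏ i, ENNReal.ofReal (Real.exp (x i * u i / v - u i ^ 2 / (2 * v))) := by
    have h1 := fun i : Fin d => gaussianReal_eq_withDensity hv0 (u i)
    have : ∀ i : Fin d, SigmaFinite ((gaussianReal 0 v).withDensity
      fun x => ENNReal.ofReal (Real.exp (x * u i / v - u i ^ 2 / (2 * v)))) :=
      fun i => by rw [← h1 i]; infer_instance
    have h2 := pi_withDensity (fun _ : Fin d => gaussianReal 0 v)
      (fun i x => ENNReal.ofReal (Real.exp (x * u i / v - u i ^ 2 / (2 * v))))
      (fun i => by fun_prop)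
    rw [← h2]
    simp_rw [← h1]
    have hm : ∀ i : Fin d, (gaussianReal 0 v).map (fun x => x + u i) = gaussianReal (u i) v :=
      fun i => by rw [gaussianReal_map_add_const, zero_add]
    have : ∀ i : Fin d, SigmaFinite ((gaussianReal 0 v).map (fun x => x + u i)) :=
      fun i => by rw [hm]; infer_instance
    rw [Measure.pi_map_pi (f := fun i x => x + u i) fun i => by fun_prop]
    simp_rw [hm]
  have hsum : ∀ x : Fin d → ℝ, e x + u = e (fun i => x i + u i) := by
    intro x
    ext i
    simp [e]
  unfold noiseMeasure
  rw [lintegral_map (by fun_prop) he, lintegral_map (by fun_prop) he]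
  simp_rw [hsum, hi, Real.exp_sum]
  have hhe : Measurable fun y : Fin d → ℝ => h (e y) := hh.comp he
  have hshift := lintegral_map (μ := Measure.pi fun _ : Fin d => gaussianReal 0 v)
    (g := fun x i => x i + u i) hhe (by fun_prop)
  rw [← hv, ← hshift, hmap, lintegral_withDensity_eq_lintegral_mul _ (by fun_prop) hhe]
  refine lintegral_congr fun x => ?_
  rw [Pi.mul_apply, mul_comm, ENNReal.ofReal_prod_of_nonneg fun i _ => (Real.exp_pos _).le]

end GaussianShift

section RealInequalities

/-- A second-order upper bound for `t ↦ t ^ a` around `t = 1`. -/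
theorem rpow_le_second_order {a t M : ℝ} (ha : 1 < a) (ht : 0 < t) (hM : 1 ≤ M) (htM : t ≤ M) :
    t ^ a ≤ 1 + a * (t - 1) + a * (a - 1) * (t - 1) ^ 2 * M ^ max (a - 2) 0 := by
  have hMr : 1 ≤ M ^ max (a - 2) 0 := Real.one_le_rpow hM (le_max_right _ _)
  have hta : t ^ a = t * t ^ (a - 1) := by
    rw [← Real.rpow_one_add' ht.le (by linarith)]; ring_nf
  rcases le_total a 2 with h2 | h2
  · have hb : t ^ (a - 1) ≤ 1 + (a - 1) * (t - 1) := by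
      have := rpow_one_add_le_one_add_mul_self (s := t - 1) (by linarith) (p := a - 1)
        (by linarith) (by linarith)
      simpa using this
    have h3 : t * t ^ (a - 1) ≤ t * (1 + (a - 1) * (t - 1)) := mul_le_mul_of_nonneg_left hb ht.le
    have h4 : (a - 1) * (t - 1) ^ 2 * 1 ≤ a * (a - 1) * (t - 1) ^ 2 * M ^ max (a - 2) 0 := by
      apply mul_le_mul _ hMr zero_le_one
        (mul_nonneg (mul_nonneg (by linarith) (by linarith)) (sq_nonneg _))
      nlinarith [mul_nonneg (sub_nonneg.2 ha.le) (sq_nonneg (t - 1))]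
    rw [hta]
    nlinarith
  · rw [max_eq_left (by linarith)] at hMr ⊢
    have htangent : t ^ a - 1 - a * (t - 1) ≤ a * ((t - 1) * (t ^ (a - 1) - 1)) := by
      have h := one_add_mul_self_le_rpow_one_add (s := t⁻¹ - 1)
        (by linarith [inv_pos.2 ht]) (p := a) ha.le
      rw [add_sub_cancel, Real.inv_rpow ht.le] at h
      have hpos : 0 < t ^ a := Real.rpow_pos_of_pos ht a
      have h' := mul_le_mul_of_nonneg_left h hpos.le
      rw [mul_inv_cancel₀ hpos.ne'] at h'
      have h'' : t ^ a * (1 + a * (t⁻¹ - 1)) = t ^ a + a * (t ^ (a - 1) - t ^ a) := by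
        rw [hta]; field_simp
      rw [h''] at h'
      rw [hta] at h' ⊢
      linarith
    have hb : (t - 1) * (t ^ (a - 1) - 1) ≤ (a - 1) * (t - 1) ^ 2 * M ^ (a - 2) := by
      rcases le_total 1 t with h1 | h1
      · have hs := one_add_mul_self_le_rpow_one_add (s := t⁻¹ - 1)
          (by linarith [inv_pos.2 ht]) (p := a - 1) (by linarith)
        rw [add_sub_cancel, Real.inv_rpow ht.le] at hs
        have hpos : 0 < t ^ (a - 1) := Real.rpow_pos_of_pos ht _
        have h' := mul_le_mul_of_nonneg_left hs hpos.le
        rw [mul_inv_cancel₀ hpos.ne'] at h'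
        have hta2 : t ^ (a - 1) = t * t ^ (a - 2) := by
          rw [← Real.rpow_one_add' ht.le (by linarith)]; ring_nf
        have h'' : t ^ (a - 1) * (1 + (a - 1) * (t⁻¹ - 1)) =
            t ^ (a - 1) - (a - 1) * (t - 1) * t ^ (a - 2) := by
          rw [hta2]; field_simp; ring
        rw [h''] at h'
        have hle : t ^ (a - 2) ≤ M ^ (a - 2) := Real.rpow_le_rpow ht.le htM (by linarith)
        calc (t - 1) * (t ^ (a - 1) - 1) ≤ (t - 1) * ((a - 1) * (t - 1) * t ^ (a - 2)) := by
              apply mul_le_mul_of_nonneg_left _ (by linarith); linarith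
          _ = (a - 1) * (t - 1) ^ 2 * t ^ (a - 2) := by ring
          _ ≤ _ := mul_le_mul_of_nonneg_left hle
              (mul_nonneg (by linarith) (sq_nonneg _))
      · have hs := one_add_mul_self_le_rpow_one_add (s := t - 1)
          (by linarith) (p := a - 1) (by linarith)
        rw [add_sub_cancel] at hs
        have h4 : (t - 1) * (t ^ (a - 1) - 1) ≤ (a - 1) * (t - 1) ^ 2 := by nlinarith
        have h5 : 0 ≤ (a - 1) * (t - 1) ^ 2 := mul_nonneg (by linarith) (sq_nonneg _)
        nlinarith
    have := mul_le_mul_of_nonneg_left hb (by linarith : (0 : ℝ) ≤ a)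
    linarith

theorem one_add_rpow_le_exp_half_add {r y : ℝ} (hr : 0 < r) (hy : 0 ≤ y) :
    (1 + y) ^ r ≤ Real.exp (1 / 2) + ((2 * r + 1) * y) ^ r := by
  rcases le_total y (1 / (2 * r)) with h | h
  · have h1 : (1 + y) ^ r ≤ Real.exp (1 / 2) := by
      calc (1 + y) ^ r ≤ (Real.exp (1 / (2 * r))) ^ r := by
            apply Real.rpow_le_rpow (by linarith) _ hr.le
            linarith [Real.add_one_le_exp (1 / (2 * r))]
        _ = Real.exp (1 / 2) := by
            rw [← Real.exp_mul]; congr 1; field_simp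
    have : 0 ≤ ((2 * r + 1) * y) ^ r := by positivity
    linarith
  · have h1 : (1 + y) ^ r ≤ ((2 * r + 1) * y) ^ r := by
      apply Real.rpow_le_rpow (by linarith) _ hr.le
      rw [div_le_iff₀ (by linarith)] at h
      nlinarith
    linarith [Real.exp_pos (1 / 2)]

theorem exp_sub_exp_le_mul_exp {a b k : ℝ} (ha : a ≤ k) :
    Real.exp a - Real.exp b ≤ max (a - b) 0 * Real.exp k := by
  have h1 : Real.exp a - Real.exp b ≤ (a - b) * Real.exp a := by
    have h := Real.add_one_le_exp (b - a)
    have : Real.exp b = Real.exp a * Real.exp (b - a) := by rw [← Real.exp_add]; ring_nf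
    nlinarith [Real.exp_pos a]
  have h2 : (a - b) * Real.exp a ≤ max (a - b) 0 * Real.exp a :=
    mul_le_mul_of_nonneg_right (le_max_left _ _) (Real.exp_pos a).le
  have h3 : max (a - b) 0 * Real.exp a ≤ max (a - b) 0 * Real.exp k :=
    mul_le_mul_of_nonneg_left (Real.exp_le_exp.2 ha) (le_max_right _ _)
  linarith

theorem exp_second_difference_le {m A B c x : ℝ} (hm : 0 ≤ m) (hB0 : 0 ≤ B)
    (hA : A ≤ x) (hB : B ≤ x) (hc : c ≤ (A + B) / 2) (hD : A + B - 2 * c ≤ x)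
    (hAc : A - c ≤ x) (hBc : B - c ≤ x) :
    Real.exp ((m + 2) * (m + 1) * A / 2) - 2 * Real.exp ((m + 1) * m * A / 2 + (m + 1) * c) +
      Real.exp (m * (m - 1) * A / 2 + 2 * m * c + B) ≤
      (m + 1) * x * Real.exp ((m + 1) * (m + 2) * x / 2) := by
  set k := (m + 1) * (m + 2) * x / 2 with hk
  have h0 : (m + 2) * (m + 1) * A / 2 ≤ k := by
    have := mul_le_mul_of_nonneg_left hA (by positivity : 0 ≤ (m + 2) * (m + 1))
    rw [hk]; linarith
  have h2 : m * (m - 1) * A / 2 + 2 * m * c + B ≤ k := by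
    have e1 := mul_le_mul_of_nonneg_left hc hm
    have e2 := mul_le_mul_of_nonneg_left hA (by positivity : 0 ≤ m * (m + 1))
    have e3 := mul_le_mul_of_nonneg_left hB (by positivity : 0 ≤ m + 1)
    rw [hk]; nlinarith
  have e0 := exp_sub_exp_le_mul_exp (b := (m + 1) * m * A / 2 + (m + 1) * c) h0
  have e2 := exp_sub_exp_le_mul_exp (b := (m + 1) * m * A / 2 + (m + 1) * c) h2
  have hx : 0 ≤ x := hB0.trans hB
  have hmx : 0 ≤ m * x := mul_nonneg hm hx
  have key : max ((m + 2) * (m + 1) * A / 2 - ((m + 1) * m * A / 2 + (m + 1) * c)) 0 +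
      max (m * (m - 1) * A / 2 + 2 * m * c + B - ((m + 1) * m * A / 2 + (m + 1) * c)) 0 ≤
      (m + 1) * x := by
    have i0 : (m + 2) * (m + 1) * A / 2 - ((m + 1) * m * A / 2 + (m + 1) * c) =
        (m + 1) * (A - c) := by ring
    have i2 : m * (m - 1) * A / 2 + 2 * m * c + B - ((m + 1) * m * A / 2 + (m + 1) * c) =
        (B - c) - m * (A - c) := by ring
    rw [i0, i2]
    have hmAc := mul_le_mul_of_nonneg_left hAc hm
    have hmD := mul_le_mul_of_nonneg_left hD hm
    have hmc := mul_le_mul_of_nonneg_left hc hm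
    have hmBc := mul_le_mul_of_nonneg_left hBc hm
    rcases le_total 0 (A - c) with hp | hp
    · rw [max_eq_left (mul_nonneg (by linarith) hp)]
      have := mul_nonneg hm hp
      rcases max_cases (B - c - m * (A - c)) 0 with ⟨h, _⟩ | ⟨h, _⟩ <;> rw [h] <;> nlinarith
    · rw [max_eq_right (mul_nonpos_of_nonneg_of_nonpos (by linarith) hp)]
      rcases max_cases (B - c - m * (A - c)) 0 with ⟨h, _⟩ | ⟨h, _⟩ <;> rw [h] <;> nlinarith
  have := mul_le_mul_of_nonneg_right key (Real.exp_pos k).le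
  nlinarith

theorem exp_two_thirds_le : Real.exp (2 / 3) ≤ 1.95 := by
  have h : Real.exp (2 / 3) ^ 3 = Real.exp 1 ^ 2 := by
    rw [← Real.exp_nat_mul, ← Real.exp_nat_mul]; norm_num
  have h1 := Real.exp_one_lt_d9
  have h2 : Real.exp 1 ^ 2 ≤ 2.7182818286 ^ 2 := by
    gcongr
  by_contra! hlt
  have : (1.95 : ℝ) ^ 3 < Real.exp (2 / 3) ^ 3 := by gcongr
  rw [h] at this
  norm_num at this h2
  linarith

theorem exp_half_bounds : 1.64 ≤ Real.exp (1 / 2) ∧ Real.exp (1 / 2) ≤ 1.65 := by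
  have h : Real.exp (1 / 2) ^ 2 = Real.exp 1 := by
    rw [← Real.exp_nat_mul]; norm_num
  have h1 := Real.exp_one_lt_d9
  have h2 := Real.exp_one_gt_d9
  have := Real.exp_pos (1 / 2)
  constructor <;> nlinarith

/-- Numerical bound for orders `α ≤ 3`. -/
theorem subsampled_bound_small {α γ x r : ℝ} (hα : 1 < α) (hr : r = max (α - 2) 0) (hr1 : r ≤ 1)
    (hγ : 0 < γ) (hx : 0 < x) (hx' : x ≤ 2 / 3) (hγα : γ * (5 / 2) * Real.exp α ≤ 1) :
    γ < 1 ∧ x * Real.exp x + r * (γ / (1 - γ)) * (2 * x * Real.exp (3 * x)) ≤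
      5 * (1 - γ) * x := by
  have he := Real.exp_one_gt_d9
  have he' := Real.exp_one_lt_d9
  have hγ1 : γ ≤ 0.15 := by
    have := Real.exp_le_exp.2 hα.le
    nlinarith
  have hrγ : r * γ ≤ 0.06 := by
    rcases le_total α 2 with h | h
    · rw [hr, max_eq_right (by linarith)]; norm_num
    · have h2 := Real.exp_le_exp.2 h
      have h3 : Real.exp 2 = Real.exp 1 ^ 2 := by rw [← Real.exp_nat_mul]; norm_num
      have : γ ≤ 0.06 := by nlinarith
      nlinarith
  have hr0 : 0 ≤ r := hr ▸ le_max_right _ _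
  refine ⟨by linarith, ?_⟩
  have hex : Real.exp x ≤ 1.95 := (Real.exp_le_exp.2 hx').trans exp_two_thirds_le
  have hex3 : Real.exp (3 * x) ≤ 7.4 := by
    calc Real.exp (3 * x) ≤ Real.exp 2 := Real.exp_le_exp.2 (by linarith)
      _ = Real.exp 1 ^ 2 := by rw [← Real.exp_nat_mul]; norm_num
      _ ≤ 7.4 := by nlinarith
  have hg : r * (γ / (1 - γ)) ≤ 0.08 := by
    rw [← mul_div_assoc, div_le_iff₀ (by linarith)]; nlinarith
  have hg0 : 0 ≤ r * (γ / (1 - γ)) := mul_nonneg hr0 (div_nonneg hγ.le (by linarith))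
  have h5 : r * (γ / (1 - γ)) * Real.exp (3 * x) ≤ 0.08 * 7.4 :=
    mul_le_mul hg hex3 (Real.exp_pos _).le (by norm_num)
  have h6 : Real.exp x + 2 * (r * (γ / (1 - γ)) * Real.exp (3 * x)) ≤ 5 * (1 - γ) := by
    linarith
  have := mul_le_mul_of_nonneg_right h6 hx.le
  linarith

/-- Numerical bound for orders `α = r + 2 ≥ 3`. -/
theorem subsampled_bound_large {γ x r : ℝ} (hr1 : 1 ≤ r) (hγ : 0 < γ) (hx : 0 < x)
    (hx' : x ≤ 2 / 3) (hγα : γ * (5 / 2) * Real.exp (r + 2) ≤ 1) :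
    γ < 1 ∧ Real.exp (1 / 2) * (x * Real.exp x) + ((2 * r + 1) * (γ / (1 - γ))) ^ r *
      ((r + 1) * x * Real.exp ((r + 1) * (r + 2) * x / 2)) ≤ 5 * (1 - γ) * x := by
  have he := Real.exp_one_gt_d9
  obtain ⟨hh1, hh2⟩ := exp_half_bounds
  have hγ1 : γ ≤ 0.02 := by
    have h1 : Real.exp 3 ≤ Real.exp (r + 2) := Real.exp_le_exp.2 (by linarith)
    have h2 : Real.exp 3 = Real.exp 1 ^ 3 := by rw [← Real.exp_nat_mul]; norm_num
    have h3 : (2.718 : ℝ) ^ 3 ≤ Real.exp 1 ^ 3 := by gcongr; linarith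
    have h4 : 20 ≤ Real.exp (r + 2) := by norm_num at h3; linarith
    nlinarith
  refine ⟨by linarith, ?_⟩
  have hex : Real.exp x ≤ 1.95 := (Real.exp_le_exp.2 hx').trans exp_two_thirds_le
  have hg : (2 * r + 1) * (γ / (1 - γ)) ≤ Real.exp (-13 / 6 - r / 3) := by
    have h1 : 2 * r + 1 ≤ 3 * Real.exp (2 * (r - 1) / 3) := by
      linarith [Real.add_one_le_exp (2 * (r - 1) / 3)]
    have h2 : γ / (1 - γ) ≤ Real.exp (-(r + 2)) / 2.45 := by
      have h3 : γ * (5 / 2) ≤ Real.exp (-(r + 2)) := by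
        rw [Real.exp_neg, ← one_div, le_div_iff₀ (Real.exp_pos _)]; exact hγα
      rw [div_le_div_iff₀ (by linarith) (by norm_num)]
      nlinarith [Real.exp_pos (-(r + 2))]
    calc (2 * r + 1) * (γ / (1 - γ))
        ≤ (3 * Real.exp (2 * (r - 1) / 3)) * (Real.exp (-(r + 2)) / 2.45) :=
          mul_le_mul h1 h2 (div_nonneg hγ.le (by linarith)) (by positivity)
      _ = 3 / 2.45 * Real.exp (2 * (r - 1) / 3 + -(r + 2)) := by rw [Real.exp_add]; ring
      _ ≤ Real.exp (1 / 2) * Real.exp (2 * (r - 1) / 3 + -(r + 2)) := by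
          apply mul_le_mul_of_nonneg_right _ (Real.exp_pos _).le
          norm_num at hh1 ⊢; linarith
      _ = Real.exp (-13 / 6 - r / 3) := by rw [← Real.exp_add]; congr 1; ring
  have hg0 : 0 ≤ (2 * r + 1) * (γ / (1 - γ)) :=
    mul_nonneg (by linarith) (div_nonneg hγ.le (by linarith))
  have hpow : ((2 * r + 1) * (γ / (1 - γ))) ^ r ≤ Real.exp (-13 / 6 * r - r ^ 2 / 3) := by
    calc _ ≤ (Real.exp (-13 / 6 - r / 3)) ^ r := Real.rpow_le_rpow hg0 hg (by linarith)
      _ = _ := by rw [← Real.exp_mul]; congr 1; ring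
  have hr2 : r + 1 ≤ 2 * Real.exp ((r - 1) / 2) := by
    linarith [Real.add_one_le_exp ((r - 1) / 2)]
  have hk : Real.exp ((r + 1) * (r + 2) * x / 2) ≤ Real.exp ((r + 1) * (r + 2) / 3) := by
    apply Real.exp_le_exp.2
    have := mul_le_mul_of_nonneg_left hx' (by positivity : 0 ≤ (r + 1) * (r + 2))
    linarith
  have hQ : ((2 * r + 1) * (γ / (1 - γ))) ^ r *
      ((r + 1) * Real.exp ((r + 1) * (r + 2) * x / 2)) ≤ 1.25 := by
    calc _ ≤ Real.exp (-13 / 6 * r - r ^ 2 / 3) *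
          (2 * Real.exp ((r - 1) / 2) * Real.exp ((r + 1) * (r + 2) / 3)) := by
          gcongr
      _ = 2 * Real.exp (-13 / 6 * r - r ^ 2 / 3 + (r - 1) / 2 + (r + 1) * (r + 2) / 3) := by
          rw [Real.exp_add, Real.exp_add]; ring
      _ ≤ 2 * Real.exp (-(1 / 2)) := by
          gcongr; nlinarith
      _ ≤ 1.25 := by
          rw [Real.exp_neg, ← div_eq_mul_inv, div_le_iff₀ (Real.exp_pos _)]; linarith
  have hE : Real.exp (1 / 2) * Real.exp x ≤ 1.65 * 1.95 :=
    mul_le_mul hh2 hex (Real.exp_pos _).le (by norm_num)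
  have := mul_le_mul_of_nonneg_right (add_le_add hE hQ) hx.le
  nlinarith

end RealInequalities

section GaussianMoments

variable {E : Type*} [NormedAddCommGroup E] [InnerProductSpace ℝ E]

/-- The density at `z` of a Gaussian of mean `u` and variance `v` in each direction, with
respect to the centered one. -/
noncomputable def shiftDensity (v : ℝ) (u z : E) : ℝ :=
  Real.exp (inner ℝ z u / v - ‖u‖ ^ 2 / (2 * v))

theorem shiftDensity_pos (v : ℝ) (u z : E) : 0 < shiftDensity v u z := Real.exp_pos _

theorem shiftDensity_rpow_mul_rpow (v a b : ℝ) (u u' z : E) :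
    shiftDensity v u z ^ a * shiftDensity v u' z ^ b =
      Real.exp (inner ℝ z (a • u + b • u') / v +
        -(a * ‖u‖ ^ 2 + b * ‖u'‖ ^ 2) / (2 * v)) := by
  simp only [shiftDensity]
  rw [← Real.exp_mul, ← Real.exp_mul, ← Real.exp_add, inner_add_right, real_inner_smul_right,
    real_inner_smul_right]
  congr 1
  ring

variable [MeasurableSpace E] [BorelSpace E]

@[fun_prop]
theorem measurable_shiftDensity (v : ℝ) (u : E) : Measurable (shiftDensity v u) := by
  have : Continuous (shiftDensity v u) := by unfold shiftDensity; fun_prop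
  exact this.measurable

variable {N : Measure E} [IsProbabilityMeasure N] {v : ℝ}

theorem HasGaussianShift.lintegral_exp (hN : HasGaussianShift N v) (w : E) (c : ℝ) :
    ∫⁻ z, ENNReal.ofReal (Real.exp (inner ℝ z w / v + c)) ∂N =
      ENNReal.ofReal (Real.exp (‖w‖ ^ 2 / (2 * v) + c)) := by
  have h := hN w 1 measurable_one
  simp only [Pi.one_apply, lintegral_const, measure_univ, one_mul, mul_one] at h
  have hm : Measurable fun z : E =>
      ENNReal.ofReal (Real.exp (inner ℝ z w / v - ‖w‖ ^ 2 / (2 * v))) :=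
    (measurable_shiftDensity v w).ennreal_ofReal
  calc _ = ∫⁻ z, ENNReal.ofReal (Real.exp (‖w‖ ^ 2 / (2 * v) + c)) *
        ENNReal.ofReal (Real.exp (inner ℝ z w / v - ‖w‖ ^ 2 / (2 * v))) ∂N := by
        refine lintegral_congr fun z => ?_
        rw [← ENNReal.ofReal_mul (Real.exp_pos _).le, ← Real.exp_add]
        congr 2
        ring
    _ = _ := by rw [lintegral_const_mul _ hm, ← h, mul_one]

theorem HasGaussianShift.integrable_exp (hN : HasGaussianShift N v) (w : E) (c : ℝ) :
    Integrable (fun z => Real.exp (inner ℝ z w / v + c)) N := by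
  have hm : Continuous fun z : E => Real.exp (inner ℝ z w / v + c) := by fun_prop
  refine ⟨hm.measurable.aestronglyMeasurable, ?_⟩
  rw [hasFiniteIntegral_iff_ofReal (ae_of_all _ fun z => (Real.exp_pos _).le),
    hN.lintegral_exp]
  exact ENNReal.ofReal_lt_top

theorem HasGaussianShift.integral_exp (hN : HasGaussianShift N v) (w : E) (c : ℝ) :
    ∫ z, Real.exp (inner ℝ z w / v + c) ∂N = Real.exp (‖w‖ ^ 2 / (2 * v) + c) := by
  rw [integral_eq_lintegral_of_nonneg_ae (ae_of_all _ fun z => (Real.exp_pos _).le)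
    (hN.integrable_exp w c).aestronglyMeasurable, hN.lintegral_exp,
    ENNReal.toReal_ofReal (Real.exp_pos _).le]

theorem HasGaussianShift.integrable_rpow_mul_rpow (hN : HasGaussianShift N v) (u u' : E)
    (a b : ℝ) :
    Integrable (fun z => shiftDensity v u z ^ a * shiftDensity v u' z ^ b) N := by
  simp_rw [shiftDensity_rpow_mul_rpow]
  exact hN.integrable_exp _ _

theorem HasGaussianShift.integral_rpow_mul_rpow (hN : HasGaussianShift N v) (u u' : E)
    (a b : ℝ) :
    ∫ z, shiftDensity v u z ^ a * shiftDensity v u' z ^ b ∂N =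
      Real.exp (a * (a - 1) * (‖u‖ ^ 2 / v) / 2 + b * (b - 1) * (‖u'‖ ^ 2 / v) / 2 +
        a * b * (inner ℝ u u' / v)) := by
  simp_rw [shiftDensity_rpow_mul_rpow]
  rw [hN.integral_exp]
  congr 1
  rw [norm_add_sq_real, norm_smul, norm_smul, real_inner_smul_left, real_inner_smul_right,
    mul_pow, mul_pow, Real.norm_eq_abs, Real.norm_eq_abs, sq_abs, sq_abs]
  ring

theorem HasGaussianShift.integrable_shiftDensity (hN : HasGaussianShift N v) (u : E) :
    Integrable (shiftDensity v u) N := by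
  simpa using hN.integrable_rpow_mul_rpow u u 1 0

theorem HasGaussianShift.integral_shiftDensity (hN : HasGaussianShift N v) (u : E) :
    ∫ z, shiftDensity v u z ∂N = 1 := by
  simpa using hN.integral_rpow_mul_rpow u u 1 0

theorem HasGaussianShift.sq_sub_moment (hN : HasGaussianShift N v) (hv : 0 < v) {u u' : E}
    {x m : ℝ} (hm : 0 ≤ m) (hu : ‖u‖ ^ 2 / v ≤ x) (hu' : ‖u'‖ ^ 2 / v ≤ x)
    (huu' : ‖u - u'‖ ^ 2 / v ≤ x) :
    Integrable (fun z => (shiftDensity v u z - shiftDensity v u' z) ^ 2 *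
      shiftDensity v u z ^ m) N ∧
    ∫ z, (shiftDensity v u z - shiftDensity v u' z) ^ 2 * shiftDensity v u z ^ m ∂N ≤
      (m + 1) * x * Real.exp ((m + 1) * (m + 2) * x / 2) := by
  have hexp : (fun z => (shiftDensity v u z - shiftDensity v u' z) ^ 2 *
      shiftDensity v u z ^ m) = fun z =>
      shiftDensity v u z ^ (m + 2) * shiftDensity v u' z ^ (0 : ℝ) -
      2 * (shiftDensity v u z ^ (m + 1) * shiftDensity v u' z ^ (1 : ℝ)) +
      shiftDensity v u z ^ m * shiftDensity v u' z ^ (2 : ℝ) := by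
    ext z
    have h2 : shiftDensity v u z ^ (m + 2) = shiftDensity v u z ^ m * shiftDensity v u z ^ 2 := by
      rw [Real.rpow_add (shiftDensity_pos v u z), Real.rpow_two]
    rw [h2, Real.rpow_add_one (shiftDensity_pos v u z).ne', Real.rpow_zero, Real.rpow_one,
      Real.rpow_two]
    ring
  have i0 := hN.integrable_rpow_mul_rpow u u' (m + 2) 0
  have i1 := (hN.integrable_rpow_mul_rpow u u' (m + 1) 1).const_mul 2
  have i2 := hN.integrable_rpow_mul_rpow u u' m 2
  have i01 : Integrable (fun z => shiftDensity v u z ^ (m + 2) * shiftDensity v u' z ^ (0 : ℝ) -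
      2 * (shiftDensity v u z ^ (m + 1) * shiftDensity v u' z ^ (1 : ℝ))) N := i0.sub i1
  rw [hexp]
  refine ⟨i01.add i2, ?_⟩
  rw [integral_add i01 i2, integral_sub i0 i1, integral_const_mul,
    hN.integral_rpow_mul_rpow, hN.integral_rpow_mul_rpow, hN.integral_rpow_mul_rpow]
  have hD : ‖u - u'‖ ^ 2 / v = ‖u‖ ^ 2 / v + ‖u'‖ ^ 2 / v - 2 * (inner ℝ u u' / v) := by
    rw [norm_sub_sq_real]; ring
  have hD0 : 0 ≤ ‖u - u'‖ ^ 2 / v := by positivity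
  have hcs : ∀ p q : E, ‖p‖ ^ 2 / v ≤ x → ‖q‖ ^ 2 / v ≤ x → inner ℝ p q / v ≤ x := by
    intro p q hp hq
    rw [div_le_iff₀ hv] at *
    have h1 := real_inner_le_norm p q
    nlinarith [sq_nonneg (‖p‖ - ‖q‖)]
  have hAc : ‖u‖ ^ 2 / v - inner ℝ u u' / v ≤ x := by
    have := hcs u (u - u') hu huu'
    rw [inner_sub_right, real_inner_self_eq_norm_sq] at this
    rwa [← sub_div]
  have hBc : ‖u'‖ ^ 2 / v - inner ℝ u u' / v ≤ x := by
    have := hcs u' (u' - u) hu' (by rwa [norm_sub_rev])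
    rw [inner_sub_right, real_inner_self_eq_norm_sq, real_inner_comm] at this
    rwa [← sub_div]
  have h := exp_second_difference_le hm (by positivity : 0 ≤ ‖u'‖ ^ 2 / v) hu hu'
    (c := inner ℝ u u' / v) (by linarith) (by linarith) hAc hBc
  refine le_of_eq_of_le ?_ h
  congr 1
  · congr 1
    · congr 1; ring
    · congr 2; ring
  · congr 1; ring

/-- The weighted `χ²`-type bound behind the privacy amplification by subsampling. -/
theorem HasGaussianShift.weighted_sq_sub_bound (hN : HasGaussianShift N v) (hv : 0 < v)
    {u u' : E} {x α γ : ℝ} (hα : 1 < α) (hγ : 0 < γ) (hx : 0 < x) (hx' : x ≤ 2 / 3)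
    (hγα : γ * (5 / 2) * Real.exp α ≤ 1) (hu : ‖u‖ ^ 2 / v ≤ x) (hu' : ‖u'‖ ^ 2 / v ≤ x)
    (huu' : ‖u - u'‖ ^ 2 / v ≤ x) :
    γ < 1 ∧
    Integrable (fun z => (shiftDensity v u z - shiftDensity v u' z) ^ 2 *
      (1 + γ / (1 - γ) * shiftDensity v u z) ^ max (α - 2) 0) N ∧
    ∫ z, (shiftDensity v u z - shiftDensity v u' z) ^ 2 *
      (1 + γ / (1 - γ) * shiftDensity v u z) ^ max (α - 2) 0 ∂N ≤ 5 * (1 - γ) * x := by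
  obtain ⟨r, hr⟩ : ∃ r, r = max (α - 2) 0 := ⟨_, rfl⟩
  have hr0 : 0 ≤ r := hr ▸ le_max_right _ _
  rw [← hr]
  have hγ1 : γ < 1 := by
    have := Real.add_one_le_exp α
    nlinarith
  refine ⟨hγ1, ?_⟩
  set g := γ / (1 - γ) with hg
  have hg0 : 0 < g := div_pos hγ (by linarith)
  have hmeas : AEStronglyMeasurable (fun z => (shiftDensity v u z - shiftDensity v u' z) ^ 2 *
      (1 + g * shiftDensity v u z) ^ r) N := by
    apply Measurable.aestronglyMeasurable
    fun_prop
  obtain ⟨i0, b0⟩ := hN.sq_sub_moment hv le_rfl hu hu' huu'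
  simp only [Real.rpow_zero, mul_one, zero_add, one_mul] at i0 b0
  rw [mul_div_cancel_left₀ x two_ne_zero] at b0
  suffices H : ∃ F : E → ℝ, Integrable F N ∧ ∫ z, F z ∂N ≤ 5 * (1 - γ) * x ∧
      ∀ z, (shiftDensity v u z - shiftDensity v u' z) ^ 2 * (1 + g * shiftDensity v u z) ^ r ≤
        F z by
    obtain ⟨F, hF, hFx, hle⟩ := H
    have hsq : Integrable (fun z => (shiftDensity v u z - shiftDensity v u' z) ^ 2 *
        (1 + g * shiftDensity v u z) ^ r) N := by
      refine hF.mono' hmeas (ae_of_all _ fun z => ?_)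
      have := shiftDensity_pos v u z
      rw [Real.norm_of_nonneg (by positivity)]
      exact hle z
    exact ⟨hsq, (integral_mono hsq hF hle).trans hFx⟩
  rcases le_total r 1 with hr1 | hr1
  · obtain ⟨i1, b1⟩ := hN.sq_sub_moment hv zero_le_one hu hu' huu'
    refine ⟨_, i0.add (i1.const_mul (r * g)), ?_, fun z => ?_⟩
    · have := (subsampled_bound_small hα hr hr1 hγ hx hx' hγα).2
      refine le_trans ?_ this
      simp only [Pi.add_apply]
      rw [integral_add i0 (i1.const_mul (r * g)), integral_const_mul]
      refine add_le_add b0 (mul_le_mul_of_nonneg_left (b1.trans_eq ?_) (by positivity))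
      ring_nf
    · have hX := shiftDensity_pos v u z
      have h := rpow_one_add_le_one_add_mul_self (s := g * shiftDensity v u z)
        (by nlinarith [mul_pos hg0 hX]) hr0 hr1
      have := mul_le_mul_of_nonneg_left h
        (sq_nonneg (shiftDensity v u z - shiftDensity v u' z))
      refine this.trans_eq ?_
      simp only [Pi.add_apply, Real.rpow_one]
      ring
  · obtain ⟨i1, b1⟩ := hN.sq_sub_moment hv hr0 hu hu' huu'
    have hαr : α = r + 2 := by
      rcases max_cases (α - 2) 0 with ⟨h, _⟩ | ⟨h, _⟩ <;> linarith
    refine ⟨_, (i0.const_mul (Real.exp (1 / 2))).add (i1.const_mul (((2 * r + 1) * g) ^ r)),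
      ?_, fun z => ?_⟩
    · have := (subsampled_bound_large hr1 hγ hx hx' (hαr ▸ hγα)).2
      refine le_trans ?_ this
      simp only [Pi.add_apply]
      rw [integral_add (i0.const_mul _) (i1.const_mul _), integral_const_mul,
        integral_const_mul]
      exact add_le_add (mul_le_mul_of_nonneg_left b0 (Real.exp_pos _).le)
        (mul_le_mul_of_nonneg_left b1 (by positivity))
    · have hX := shiftDensity_pos v u z
      have h := one_add_rpow_le_exp_half_add (r := r) (y := g * shiftDensity v u z)
        (by linarith) (by positivity)
      rw [← mul_assoc, Real.mul_rpow (by positivity) hX.le] at h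
      have := mul_le_mul_of_nonneg_left h
        (sq_nonneg (shiftDensity v u z - shiftDensity v u' z))
      refine this.trans_eq ?_
      simp only [Pi.add_apply]
      ring

/-- The Rényi moment of order `α` of two Gaussian mixtures sharing the component `N`. -/
theorem HasGaussianShift.lintegral_renyi_le (hN : HasGaussianShift N v) (hv : 0 < v)
    {u u' : E} {x α γ : ℝ} (hα : 1 < α) (hγ : 0 < γ) (hx : 0 < x) (hx' : x ≤ 2 / 3)
    (hγα : γ * (5 / 2) * Real.exp α ≤ 1) (hu : ‖u‖ ^ 2 / v ≤ x) (hu' : ‖u'‖ ^ 2 / v ≤ x)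
    (huu' : ‖u - u'‖ ^ 2 / v ≤ x) :
    ∫⁻ z, ENNReal.ofReal ((1 - γ + γ * shiftDensity v u z) ^ α *
      (1 - γ + γ * shiftDensity v u' z) ^ (1 - α)) ∂N ≤
      ENNReal.ofReal (Real.exp (α * (α - 1) * (5 * γ ^ 2 * x))) := by
  obtain ⟨hγ1, hsq, hbd⟩ :=
    hN.weighted_sq_sub_bound hv hα hγ hx hx' hγα hu hu' huu'
  set C := α * (α - 1) * (γ ^ 2 / (1 - γ)) with hC
  have hγ1' : 0 < 1 - γ := by linarith
  have hC0 : 0 ≤ C := by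
    have : 0 < α - 1 := by linarith
    positivity
  have iX := hN.integrable_shiftDensity u
  have iY := hN.integrable_shiftDensity u'
  have iq : Integrable (fun z => 1 - γ + γ * shiftDensity v u' z) N :=
    (integrable_const _).add (iY.const_mul γ)
  have iXY : Integrable (fun z => α * γ * (shiftDensity v u z - shiftDensity v u' z)) N :=
    (iX.sub iY).const_mul _
  have iqd : Integrable (fun z => 1 - γ + γ * shiftDensity v u' z +
      α * γ * (shiftDensity v u z - shiftDensity v u' z)) N := iq.add iXY
  have hpt : ∀ z, (1 - γ + γ * shiftDensity v u z) ^ α *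
      (1 - γ + γ * shiftDensity v u' z) ^ (1 - α) ≤ (1 - γ + γ * shiftDensity v u' z) +
        α * γ * (shiftDensity v u z - shiftDensity v u' z) +
        C * ((shiftDensity v u z - shiftDensity v u' z) ^ 2 *
          (1 + γ / (1 - γ) * shiftDensity v u z) ^ max (α - 2) 0) := by
    intro z
    have hX := shiftDensity_pos v u z
    have hY := shiftDensity_pos v u' z
    set X := shiftDensity v u z
    set Y := shiftDensity v u' z
    obtain ⟨p, hp⟩ : ∃ p, p = 1 - γ + γ * X := ⟨_, rfl⟩
    obtain ⟨q, hq⟩ : ∃ q, q = 1 - γ + γ * Y := ⟨_, rfl⟩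
    have hp0 : 0 < p := by rw [hp]; positivity
    have hq1 : 1 - γ ≤ q := by rw [hq]; linarith [mul_pos hγ hY]
    have hq0 : 0 < q := by linarith
    rw [← hp, ← hq]
    set M := 1 + γ / (1 - γ) * X with hMdef
    have hM1 : 1 ≤ M := by
      have : 0 < γ / (1 - γ) * X := by positivity
      linarith
    have hpM : p / q ≤ M := by
      have h1 : p = (1 - γ) * M := by rw [hp, hMdef]; field_simp
      rw [div_le_iff₀ hq0, h1, mul_comm]
      exact mul_le_mul_of_nonneg_left hq1 (by linarith)
    have h := mul_le_mul_of_nonneg_left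
      (rpow_le_second_order hα (div_pos hp0 hq0) hM1 hpM) hq0.le
    have hl : q * (p / q) ^ α = p ^ α * q ^ (1 - α) := by
      rw [Real.div_rpow hp0.le hq0.le, Real.rpow_sub hq0, Real.rpow_one]; ring
    rw [hl] at h
    refine h.trans ?_
    have hW : 0 ≤ M ^ max (α - 2) 0 := by positivity
    have e1 : q * (1 + α * (p / q - 1) +
        α * (α - 1) * (p / q - 1) ^ 2 * M ^ max (α - 2) 0) =
        q + α * (p - q) + α * (α - 1) * ((p - q) ^ 2 * M ^ max (α - 2) 0) * q⁻¹ := by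
      field_simp
    have e2 : p - q = γ * (X - Y) := by rw [hp, hq]; ring
    have e3 : C * ((X - Y) ^ 2 * M ^ max (α - 2) 0) =
        α * (α - 1) * ((p - q) ^ 2 * M ^ max (α - 2) 0) * (1 - γ)⁻¹ := by
      rw [e2, hC]; ring
    have hα1 : 0 < α - 1 := by linarith
    have hinv : q⁻¹ ≤ (1 - γ)⁻¹ := inv_anti₀ hγ1' hq1
    have := mul_le_mul_of_nonneg_left hinv
      (by positivity : 0 ≤ α * (α - 1) * ((p - q) ^ 2 * M ^ max (α - 2) 0))
    rw [e1, e3, e2] at *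
    linarith
  refine (lintegral_mono fun z => ENNReal.ofReal_le_ofReal (hpt z)).trans ?_
  have hpos : ∀ z, 0 ≤ (1 - γ + γ * shiftDensity v u' z) +
        α * γ * (shiftDensity v u z - shiftDensity v u' z) +
        C * ((shiftDensity v u z - shiftDensity v u' z) ^ 2 *
          (1 + γ / (1 - γ) * shiftDensity v u z) ^ max (α - 2) 0) := by
    intro z
    refine le_trans ?_ (hpt z)
    have hX := shiftDensity_pos v u z
    have hY := shiftDensity_pos v u' z
    positivity
  have itot : Integrable (fun z => (1 - γ + γ * shiftDensity v u' z) +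
        α * γ * (shiftDensity v u z - shiftDensity v u' z) +
        C * ((shiftDensity v u z - shiftDensity v u' z) ^ 2 *
          (1 + γ / (1 - γ) * shiftDensity v u z) ^ max (α - 2) 0)) N :=
    iqd.add (hsq.const_mul C)
  rw [← ofReal_integral_eq_lintegral_ofReal itot (ae_of_all _ hpos)]
  apply ENNReal.ofReal_le_ofReal
  have hI : ∫ z, ((1 - γ + γ * shiftDensity v u' z) +
        α * γ * (shiftDensity v u z - shiftDensity v u' z) +
        C * ((shiftDensity v u z - shiftDensity v u' z) ^ 2 *
          (1 + γ / (1 - γ) * shiftDensity v u z) ^ max (α - 2) 0)) ∂N =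
      1 + C * ∫ z, (shiftDensity v u z - shiftDensity v u' z) ^ 2 *
          (1 + γ / (1 - γ) * shiftDensity v u z) ^ max (α - 2) 0 ∂N := by
    rw [integral_add iqd (hsq.const_mul C), integral_add iq iXY, integral_const_mul,
      integral_const_mul, integral_sub iX iY, integral_add (integrable_const _)
      (iY.const_mul γ), integral_const_mul, hN.integral_shiftDensity, hN.integral_shiftDensity]
    simp
  rw [hI]
  have h1 := mul_le_mul_of_nonneg_left hbd hC0
  have h2 : C * (5 * (1 - γ) * x) = α * (α - 1) * (5 * γ ^ 2 * x) := by
    rw [hC]; field_simp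
  linarith [Real.add_one_le_exp (α * (α - 1) * (5 * γ ^ 2 * x))]

end GaussianMoments

section Mixture

theorem HasGaussianShift.mixture_le {E : Type*} [NormedAddCommGroup E] [InnerProductSpace ℝ E]
    [MeasurableSpace E] [BorelSpace E] {N : Measure E} [IsProbabilityMeasure N] {v : ℝ}
    (hN : HasGaussianShift N v) (hv : 0 < v) {a c c' : E} {x α β γ : ℝ}
    (hαβ : α.HolderConjugate β) (hγ : 0 < γ) (hγ1 : γ < 1) (hx : 0 < x) (hx' : x ≤ 2 / 3)
    (hγα : γ * (5 / 2) * Real.exp α ≤ 1) (hc : ‖c - a‖ ^ 2 / v ≤ x)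
    (hc' : ‖c' - a‖ ^ 2 / v ≤ x) (hcc' : ‖c - c'‖ ^ 2 / v ≤ x) {h : E → ℝ≥0∞}
    (hh : Measurable h) :
    ENNReal.ofReal (1 - γ) * ∫⁻ z, h (z + a) ∂N + ENNReal.ofReal γ * ∫⁻ z, h (z + c) ∂N ≤
      ENNReal.ofReal (Real.exp ((α - 1) * (5 * γ ^ 2 * x))) *
        (ENNReal.ofReal (1 - γ) * ∫⁻ z, h (z + a) ^ β ∂N +
          ENNReal.ofReal γ * ∫⁻ z, h (z + c') ^ β ∂N) ^ (1 / β) := by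
  have hα := hαβ.lt
  have hβ0 : 0 < β := hαβ.symm.pos
  have hmix : ∀ (H : E → ℝ≥0∞), Measurable H → ∀ e : E,
      ENNReal.ofReal (1 - γ) * ∫⁻ z, H (z + a) ∂N + ENNReal.ofReal γ * ∫⁻ z, H (z + e) ∂N =
      ∫⁻ z, H (z + a) * ENNReal.ofReal (1 - γ + γ * shiftDensity v (e - a) z) ∂N := by
    intro H hH e
    have hHa : Measurable fun z => H (z + a) := hH.comp (measurable_add_const a)
    have h1 : ∫⁻ z, H (z + e) ∂N =
        ∫⁻ z, H (z + a) * ENNReal.ofReal (shiftDensity v (e - a) z) ∂N := by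
      have h2 := hN (e - a) (fun z => H (z + a)) hHa
      simp only [add_assoc, sub_add_cancel] at h2
      exact h2
    have hm : Measurable fun z => H (z + a) * ENNReal.ofReal (shiftDensity v (e - a) z) := by
      fun_prop
    rw [h1, ← lintegral_const_mul _ hHa, ← lintegral_const_mul _ hm,
      ← lintegral_add_left (hHa.const_mul _)]
    refine lintegral_congr fun z => ?_
    have := shiftDensity_pos v (e - a) z
    rw [ENNReal.ofReal_add (by linarith) (by positivity), ENNReal.ofReal_mul hγ.le]
    ring
  rw [hmix h hh c, hmix (fun z => h z ^ β) (hh.pow_const β) c']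
  set u := c - a
  set u' := c' - a
  set p : E → ℝ := fun z => 1 - γ + γ * shiftDensity v u z with hp
  set q : E → ℝ := fun z => 1 - γ + γ * shiftDensity v u' z with hq
  have hp0 : ∀ z, 0 < p z := fun z => by
    have := mul_pos hγ (shiftDensity_pos v u z)
    simp only [hp]; linarith
  have hq0 : ∀ z, 0 < q z := fun z => by
    have := mul_pos hγ (shiftDensity_pos v u' z)
    simp only [hq]; linarith
  have hpm : Measurable p := by fun_prop
  have hqm : Measurable q := by fun_prop
  have hha : Measurable fun z => h (z + a) := hh.comp (measurable_add_const a)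
  have hsplit : ∀ z, h (z + a) * ENNReal.ofReal (p z) =
      ((fun z => ENNReal.ofReal (p z * q z ^ (-(1 / β)))) *
        fun z => h (z + a) * ENNReal.ofReal (q z ^ (1 / β))) z := by
    intro z
    have h1 : p z = p z * q z ^ (-(1 / β)) * q z ^ (1 / β) := by
      rw [mul_assoc, ← Real.rpow_add (hq0 z)]; simp
    have h2 : 0 ≤ p z * q z ^ (-(1 / β)) :=
      mul_nonneg (hp0 z).le (Real.rpow_nonneg (hq0 z).le _)
    conv_lhs => rw [h1, ENNReal.ofReal_mul h2]
    simp only [Pi.mul_apply]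
    ring
  calc ∫⁻ z, h (z + a) * ENNReal.ofReal (p z) ∂N
      = ∫⁻ z, ((fun z => ENNReal.ofReal (p z * q z ^ (-(1 / β)))) *
        fun z => h (z + a) * ENNReal.ofReal (q z ^ (1 / β))) z ∂N := lintegral_congr hsplit
    _ ≤ (∫⁻ z, ENNReal.ofReal (p z * q z ^ (-(1 / β))) ^ α ∂N) ^ (1 / α) *
        (∫⁻ z, (h (z + a) * ENNReal.ofReal (q z ^ (1 / β))) ^ β ∂N) ^ (1 / β) :=
        ENNReal.lintegral_mul_le_Lp_mul_Lq N hαβ (by fun_prop) (by fun_prop)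
    _ ≤ _ := by
      gcongr ?_ * ?_ ^ (1 / β)
      · have h1 : ∀ z, ENNReal.ofReal (p z * q z ^ (-(1 / β))) ^ α =
            ENNReal.ofReal (p z ^ α * q z ^ (1 - α)) := by
          intro z
          have hqz := Real.rpow_nonneg (hq0 z).le (-(1 / β))
          rw [ENNReal.ofReal_rpow_of_nonneg (mul_nonneg (hp0 z).le hqz) (by linarith),
            Real.mul_rpow (hp0 z).le hqz, ← Real.rpow_mul (hq0 z).le]
          congr 3
          have := hαβ.inv_add_inv_eq_one
          field_simp at this ⊢
          linarith
        simp_rw [h1]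
        have h2 := hN.lintegral_renyi_le hv hα hγ hx hx' hγα hc hc'
          (by rwa [sub_sub_sub_cancel_right])
        refine (ENNReal.rpow_le_rpow h2 (by positivity)).trans_eq ?_
        rw [ENNReal.ofReal_rpow_of_pos (Real.exp_pos _), ← Real.exp_mul]
        congr 2
        field_simp
      · refine (lintegral_congr fun z => ?_).le
        rw [ENNReal.mul_rpow_of_nonneg _ _ hβ0.le,
          ENNReal.ofReal_rpow_of_nonneg (Real.rpow_nonneg (hq0 z).le _) hβ0.le,
          ← Real.rpow_mul (hq0 z).le, one_div_mul_cancel hβ0.ne', Real.rpow_one]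

end Mixture

section Subsampling

variable {n b : ℕ}

theorem sum_swap_eq (i₀ : Fin n) (F : Finset (Fin n) → ℝ≥0∞) :
    ∑ B ∈ (Finset.powersetCard b Finset.univ).filter (i₀ ∉ ·),
      ∑ j ∈ B, F (insert i₀ (B.erase j)) =
    ((n - b : ℕ) : ℝ≥0∞) *
      ∑ B ∈ (Finset.powersetCard b Finset.univ).filter (i₀ ∈ ·), F B := by
  have h1 : ∀ B ∈ (Finset.powersetCard b (Finset.univ : Finset (Fin n))).filter (i₀ ∈ ·),
      ((n - b : ℕ) : ℝ≥0∞) * F B = ∑ _j ∈ Bᶜ, F B := by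
    intro B hB
    simp only [Finset.mem_filter, Finset.mem_powersetCard] at hB
    rw [Finset.sum_const, Finset.card_compl, hB.1.2, Fintype.card_fin, nsmul_eq_mul]
  rw [Finset.mul_sum, Finset.sum_congr rfl h1, Finset.sum_sigma', Finset.sum_sigma']
  refine Finset.sum_bij' (fun p _ => ⟨insert i₀ (p.1.erase p.2), p.2⟩)
    (fun p _ => ⟨insert p.2 (p.1.erase i₀), p.2⟩) ?_ ?_ ?_ ?_ ?_
  · rintro ⟨B, j⟩ h
    simp only [Finset.mem_sigma, Finset.mem_filter, Finset.mem_powersetCard] at h ⊢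
    obtain ⟨⟨⟨-, hB⟩, hi⟩, hj⟩ := h
    have hne : j ≠ i₀ := fun h => hi (h ▸ hj)
    refine ⟨⟨⟨Finset.subset_univ _, ?_⟩, Finset.mem_insert_self _ _⟩, by simp [hne]⟩
    rw [Finset.card_insert_of_notMem (by simp [hi]), Finset.card_erase_add_one hj, hB]
  · rintro ⟨B, j⟩ h
    simp only [Finset.mem_sigma, Finset.mem_filter, Finset.mem_powersetCard,
      Finset.mem_compl] at h ⊢
    obtain ⟨⟨⟨-, hB⟩, hi⟩, hj⟩ := h
    have hne : i₀ ≠ j := fun h => hj (h ▸ hi)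
    refine ⟨⟨⟨Finset.subset_univ _, ?_⟩, by simp [hne]⟩, Finset.mem_insert_self _ _⟩
    rw [Finset.card_insert_of_notMem (by simp [hj]), Finset.card_erase_add_one hi, hB]
  · rintro ⟨B, j⟩ h
    simp only [Finset.mem_sigma, Finset.mem_filter] at h
    obtain ⟨⟨-, hi⟩, hj⟩ := h
    have : insert j ((insert i₀ (B.erase j)).erase i₀) = B := by
      rw [Finset.erase_insert (by simp [hi]), Finset.insert_erase hj]
    simp only [this]
  · rintro ⟨B, j⟩ h
    simp only [Finset.mem_sigma, Finset.mem_filter, Finset.mem_compl] at h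
    obtain ⟨⟨-, hi⟩, hj⟩ := h
    have : insert i₀ ((insert j (B.erase i₀)).erase j) = B := by
      rw [Finset.erase_insert (by simp [hj]), Finset.insert_erase hi]
    simp only [this]
  · rintro ⟨B, j⟩ _
    rfl

/-- The size-`b` subsets are averaged by drawing one that avoids `i₀` and then, with probability
`b / n`, replacing one of its elements by `i₀`. -/
theorem sum_subsample_eq (hbn : b ≤ n) (i₀ : Fin n) (F : Finset (Fin n) → ℝ≥0∞) :
    ∑ p ∈ ((Finset.powersetCard b Finset.univ).filter (i₀ ∉ ·)).sigma fun B => B,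
      (ENNReal.ofReal (1 - (b : ℝ) / n) * F p.1 +
        ENNReal.ofReal ((b : ℝ) / n) * F (insert i₀ (p.1.erase p.2))) =
    ENNReal.ofReal (b * (1 - (b : ℝ) / n)) *
      ∑ B ∈ Finset.powersetCard b Finset.univ, F B := by
  have hn : (0 : ℝ) < n := by exact_mod_cast i₀.pos
  rw [Finset.sum_sigma,
    ← Finset.sum_filter_add_sum_filter_not (Finset.powersetCard b Finset.univ) (i₀ ∈ ·) F,
    mul_add, add_comm (ENNReal.ofReal _ * _)]
  have h1 : ∀ B ∈ (Finset.powersetCard b (Finset.univ : Finset (Fin n))).filter (i₀ ∉ ·),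
      ∑ j ∈ B, (ENNReal.ofReal (1 - (b : ℝ) / n) * F B +
        ENNReal.ofReal ((b : ℝ) / n) * F (insert i₀ (B.erase j))) =
      ENNReal.ofReal (b * (1 - (b : ℝ) / n)) * F B +
        ENNReal.ofReal ((b : ℝ) / n) * ∑ j ∈ B, F (insert i₀ (B.erase j)) := by
    intro B hB
    simp only [Finset.mem_filter, Finset.mem_powersetCard] at hB
    rw [Finset.sum_add_distrib, Finset.sum_const, hB.1.2, nsmul_eq_mul, ← Finset.mul_sum,
      ENNReal.ofReal_mul (by positivity), ENNReal.ofReal_natCast, mul_assoc]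
  rw [Finset.sum_congr rfl h1, Finset.sum_add_distrib, ← Finset.mul_sum, ← Finset.mul_sum,
    sum_swap_eq, ← mul_assoc]
  congr 2
  rw [← ENNReal.ofReal_natCast, ← ENNReal.ofReal_mul (by positivity), Nat.cast_sub hbn]
  congr 1
  field_simp

theorem sum_subsample_le (hb : 1 ≤ b) (hbn : b < n) (i₀ : Fin n) {α β : ℝ}
    (hαβ : α.HolderConjugate β) {K : ℝ≥0∞} (φ ψ : Finset (Fin n) → ℝ≥0∞)
    (h : ∀ B : Finset (Fin n), i₀ ∉ B → ∀ j ∈ B,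
      ENNReal.ofReal (1 - (b : ℝ) / n) * φ B +
        ENNReal.ofReal ((b : ℝ) / n) * φ (insert i₀ (B.erase j)) ≤
      K * (ENNReal.ofReal (1 - (b : ℝ) / n) * ψ B +
        ENNReal.ofReal ((b : ℝ) / n) * ψ (insert i₀ (B.erase j))) ^ (1 / β)) :
    ((Finset.powersetCard b (Finset.univ : Finset (Fin n))).card : ℝ≥0∞)⁻¹ *
        ∑ B ∈ Finset.powersetCard b Finset.univ, φ B ≤
      K * (((Finset.powersetCard b (Finset.univ : Finset (Fin n))).card : ℝ≥0∞)⁻¹ *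
        ∑ B ∈ Finset.powersetCard b Finset.univ, ψ B) ^ (1 / β) := by
  have hn : (0 : ℝ) < n := by exact_mod_cast i₀.pos
  have hb' : (0 : ℝ) < b := by exact_mod_cast hb
  have hγ1 : (b : ℝ) / n < 1 := by rw [div_lt_one hn]; exact_mod_cast hbn
  have hγ0 : 0 < (b : ℝ) / n := div_pos hb' hn
  have hα0 := hαβ.pos
  have hβ0 := hαβ.symm.pos
  set P := ((Finset.powersetCard b (Finset.univ : Finset (Fin n))).filter (i₀ ∉ ·)).sigma
    fun B => B
  set c := ENNReal.ofReal (b * (1 - (b : ℝ) / n)) with hc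
  set C := ((Finset.powersetCard b (Finset.univ : Finset (Fin n))).card : ℝ≥0∞) with hC
  have hc0 : c ≠ 0 := by
    rw [hc, ne_eq, ENNReal.ofReal_eq_zero, not_le]
    exact mul_pos hb' (by linarith)
  have hct : c ≠ ∞ := ENNReal.ofReal_ne_top
  have hCt : C ≠ ∞ := ENNReal.natCast_ne_top _
  have hC0 : C ≠ 0 := by
    rw [hC, Finset.card_powersetCard, Finset.card_univ, Fintype.card_fin]
    exact_mod_cast (Nat.choose_pos hbn.le).ne'
  have hcard : (P.card : ℝ≥0∞) = c * C := by
    have h1 := sum_subsample_eq hbn.le i₀ fun _ => 1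
    simp only [mul_one, Finset.sum_const, nsmul_eq_mul] at h1
    rw [← ENNReal.ofReal_add (by linarith) hγ0.le, sub_add_cancel, ENNReal.ofReal_one,
      mul_one] at h1
    exact h1
  set Ψ : (Σ _ : Finset (Fin n), Fin n) → ℝ≥0∞ := fun p =>
    ENNReal.ofReal (1 - (b : ℝ) / n) * ψ p.1 +
      ENNReal.ofReal ((b : ℝ) / n) * ψ (insert i₀ (p.1.erase p.2)) with hΨ
  have hjensen : ∑ p ∈ P, Ψ p ^ (1 / β) ≤ (P.card : ℝ≥0∞) ^ (1 / α) * (∑ p ∈ P, Ψ p) ^ (1 / β) := by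
    have := ENNReal.inner_le_Lp_mul_Lq P (fun _ => 1) (fun p => Ψ p ^ (1 / β)) hαβ
    simpa [← ENNReal.rpow_mul, inv_mul_cancel₀ hβ0.ne'] using this
  have hmain : c * ∑ B ∈ Finset.powersetCard b Finset.univ, φ B ≤
      K * ((c * C) ^ (1 / α) *
        (c * ∑ B ∈ Finset.powersetCard b Finset.univ, ψ B) ^ (1 / β)) := by
    rw [← sum_subsample_eq hbn.le i₀ φ, ← sum_subsample_eq hbn.le i₀ ψ, ← hcard]
    refine le_trans ?_ (mul_le_mul_right hjensen K)
    rw [Finset.mul_sum]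
    refine Finset.sum_le_sum fun p hp => ?_
    simp only [Finset.mem_sigma, Finset.mem_filter] at hp
    exact h p.1 hp.1.2 p.2 hp.2
  have hsum : 1 / α + 1 / β = 1 := by simpa using hαβ.inv_add_inv_eq_one
  have hsplit : ∀ t : ℝ≥0∞, t ≠ 0 → t ≠ ∞ → t ^ (1 / α) * t ^ (1 / β) = t := by
    intro t h0 ht
    rw [← ENNReal.rpow_add _ _ h0 ht, hsum, ENNReal.rpow_one]
  have hα1 : 0 ≤ 1 / α := by positivity
  have hβ1 : 0 ≤ 1 / β := by positivity
  set S := ∑ B ∈ Finset.powersetCard b Finset.univ, φ B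
  set S' := ∑ B ∈ Finset.powersetCard b Finset.univ, ψ B
  have hcc : c * (C * (C⁻¹ * S)) ≤ c * (C * (K * (C⁻¹ * S') ^ (1 / β))) := by
    rw [← mul_assoc C, ENNReal.mul_inv_cancel hC0 hCt, one_mul]
    refine hmain.trans_eq ?_
    have hS' : S' = C * (C⁻¹ * S') := by
      rw [← mul_assoc, ENNReal.mul_inv_cancel hC0 hCt, one_mul]
    calc K * ((c * C) ^ (1 / α) * (c * S') ^ (1 / β))
        = K * ((c * C) ^ (1 / α) * ((c * C) * (C⁻¹ * S')) ^ (1 / β)) := by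
          rw [mul_assoc c C, ← hS']
      _ = (c * C) ^ (1 / α) * (c * C) ^ (1 / β) * (K * (C⁻¹ * S') ^ (1 / β)) := by
          rw [ENNReal.mul_rpow_of_nonneg (c * C) (C⁻¹ * S') hβ1]; ring
      _ = _ := by rw [hsplit _ (mul_ne_zero hc0 hC0) (ENNReal.mul_ne_top hct hCt), mul_assoc]
  rwa [ENNReal.mul_le_mul_iff_right hc0 hct, ENNReal.mul_le_mul_iff_right hC0 hCt] at hcc

theorem lintegral_batchMeasure_prod {E : Type*} [MeasurableSpace E] (N : Measure E)
    [SFinite N] {F : Finset (Fin n) × E → ℝ≥0∞} (hF : Measurable F) :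
    ∫⁻ y, F y ∂(batchMeasure n b).prod N =
      ((Finset.powersetCard b (Finset.univ : Finset (Fin n))).card : ℝ≥0∞)⁻¹ *
        ∑ B ∈ Finset.powersetCard b Finset.univ, ∫⁻ z, F (B, z) ∂N := by
  rw [lintegral_prod _ hF.aemeasurable, batchMeasure, lintegral_smul_measure,
    lintegral_finsetSum_measure, smul_eq_mul]
  congr 1
  refine Finset.sum_congr rfl fun B _ => ?_
  rw [lintegral_dirac' _ (measurable_from_top)]

theorem isProbabilityMeasure_batchMeasure (hbn : b ≤ n) :
    IsProbabilityMeasure (batchMeasure n b) := by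
  refine ⟨?_⟩
  simp only [batchMeasure, Measure.smul_apply, Measure.finsetSum_apply, measure_univ,
    Finset.sum_const, smul_eq_mul, nsmul_eq_mul, mul_one]
  refine ENNReal.inv_mul_cancel ?_ (ENNReal.natCast_ne_top _)
  rw [Finset.card_powersetCard, Finset.card_univ, Fintype.card_fin]
  exact_mod_cast (Nat.choose_pos hbn).ne'

end Subsampling

section Composition

theorem iterate_update {E Y : Type*} {T : ℕ} {Φ : Fin T → E → Y → E}
    {w : ℕ → (Fin T → Y) → E} {w₀ : E} (hw₀ : ∀ ω, w 0 ω = w₀)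
    (hw : ∀ (k : Fin T) ω, w (k.val + 1) ω = Φ k (w k.val ω) (ω k)) (j : Fin T)
    {k : ℕ} (hk : k ≤ j) (ω : Fin T → Y) (y : Y) : w k (Function.update ω j y) = w k ω := by
  induction k with
  | zero => rw [hw₀, hw₀]
  | succ k ih =>
    have hkT : k < T := lt_of_lt_of_le (by omega) j.isLt.le
    have hne : (⟨k, hkT⟩ : Fin T) ≠ j := fun h => by simp [← h] at hk
    rw [hw ⟨k, hkT⟩, hw ⟨k, hkT⟩, Function.update_of_ne hne, ih (by omega)]

variable {E Y : Type*} [MeasurableSpace E] [MeasurableSpace Y] {T : ℕ} {M : Measure Y}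
  {Φ : Fin T → E → Y → E} {w : ℕ → (Fin T → Y) → E} {w₀ : E}

theorem measurable_iterate (hΦ : ∀ k, Measurable (Function.uncurry (Φ k)))
    (hw₀ : ∀ ω, w 0 ω = w₀) (hw : ∀ (k : Fin T) ω, w (k.val + 1) ω = Φ k (w k.val ω) (ω k))
    {k : ℕ} (hk : k ≤ T) : Measurable (w k) := by
  induction k with
  | zero => simp only [funext hw₀, measurable_const]
  | succ k ih =>
    have hw' : w (k + 1) = fun ω => Φ ⟨k, hk⟩ (w k ω) (ω ⟨k, hk⟩) := funext (hw ⟨k, hk⟩)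
    rw [hw']
    exact (hΦ ⟨k, hk⟩).comp ((ih (by omega)).prodMk (measurable_pi_apply _))

theorem lintegral_iterate_succ [IsProbabilityMeasure M]
    (hΦ : ∀ k, Measurable (Function.uncurry (Φ k))) (hw₀ : ∀ ω, w 0 ω = w₀)
    (hw : ∀ (k : Fin T) ω, w (k.val + 1) ω = Φ k (w k.val ω) (ω k)) (k : Fin T)
    {h : E → ℝ≥0∞} (hh : Measurable h) :
    ∫⁻ ω, h (w (k.val + 1) ω) ∂(Measure.pi fun _ : Fin T => M) =
      ∫⁻ ω, ∫⁻ y, h (Φ k (w k.val ω) y) ∂M ∂(Measure.pi fun _ : Fin T => M) := by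
  have hwm : Measurable (w k.val) := measurable_iterate hΦ hw₀ hw k.isLt.le
  have hV : Measurable fun e => ∫⁻ y, h (Φ k e y) ∂M :=
    Measurable.lintegral_prod_right' (f := fun p : E × Y => h (Φ k p.1 p.2)) (hh.comp (hΦ k))
  refine lintegral_eq_of_lmarginal_eq {k} (hh.comp (measurable_iterate hΦ hw₀ hw k.isLt))
    (hV.comp hwm) ?_
  funext ω
  simp only [lmarginal_singleton, hw, iterate_update hw₀ hw k le_rfl, Function.update_self]
  simp

theorem lintegral_iterate_le [IsProbabilityMeasure M] {Φ' : Fin T → E → Y → E}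
    {w' : ℕ → (Fin T → Y) → E} (hΦ : ∀ k, Measurable (Function.uncurry (Φ k)))
    (hΦ' : ∀ k, Measurable (Function.uncurry (Φ' k)))
    (hw₀ : ∀ ω, w 0 ω = w₀) (hw'₀ : ∀ ω, w' 0 ω = w₀)
    (hw : ∀ (k : Fin T) ω, w (k.val + 1) ω = Φ k (w k.val ω) (ω k))
    (hw' : ∀ (k : Fin T) ω, w' (k.val + 1) ω = Φ' k (w' k.val ω) (ω k))
    {β : ℝ} (hβ : 0 < β) {K : ℝ≥0∞}
    (hstep : ∀ (k : Fin T) (e : E) (h : E → ℝ≥0∞), Measurable h →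
      ∫⁻ y, h (Φ k e y) ∂M ≤ K * (∫⁻ y, h (Φ' k e y) ^ β ∂M) ^ (1 / β))
    {k : ℕ} (hk : k ≤ T) {h : E → ℝ≥0∞} (hh : Measurable h) :
    ∫⁻ ω, h (w k ω) ∂(Measure.pi fun _ : Fin T => M) ≤
      K ^ k * (∫⁻ ω, h (w' k ω) ^ β ∂(Measure.pi fun _ : Fin T => M)) ^ (1 / β) := by
  induction k generalizing h with
  | zero =>
    simp only [hw₀, hw'₀, lintegral_const, measure_univ, mul_one, pow_zero, one_mul]
    rw [← ENNReal.rpow_mul, mul_one_div_cancel hβ.ne', ENNReal.rpow_one]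
  | succ k ih =>
    have hhβ : Measurable fun e => h e ^ β := hh.pow_const β
    have hV : Measurable fun e => ∫⁻ y, h (Φ' ⟨k, hk⟩ e y) ^ β ∂M :=
      Measurable.lintegral_prod_right' (f := fun p : E × Y => h (Φ' ⟨k, hk⟩ p.1 p.2) ^ β)
        (hhβ.comp (hΦ' _))
    have hVβ : Measurable fun e => (∫⁻ y, h (Φ' ⟨k, hk⟩ e y) ^ β ∂M) ^ (1 / β) :=
      hV.pow_const _
    have hVw : Measurable fun ω => (∫⁻ y, h (Φ' ⟨k, hk⟩ (w k ω) y) ^ β ∂M) ^ (1 / β) :=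
      hVβ.comp (measurable_iterate hΦ hw₀ hw (Nat.le_of_succ_le hk))
    rw [lintegral_iterate_succ hΦ hw₀ hw ⟨k, hk⟩ hh,
      lintegral_iterate_succ hΦ' hw'₀ hw' ⟨k, hk⟩ hhβ]
    refine (lintegral_mono fun ω => hstep _ _ _ hh).trans ?_
    rw [lintegral_const_mul _ hVw, pow_succ', mul_assoc]
    refine mul_le_mul_right ((ih (Nat.le_of_succ_le hk) hVβ).trans_eq ?_) K
    simp_rw [← ENNReal.rpow_mul, one_div_mul_cancel hβ.ne', ENNReal.rpow_one]

end Composition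

section Conversion

/-- An `L^β` bound on probabilities, with `β` the conjugate exponent of `α`, gives
`(ε, δ)`-indistinguishability. -/
theorem le_exp_mul_add_of_le_rpow {α β ε δ μ P Q : ℝ} (hαβ : α.HolderConjugate β)
    (hε : 0 < ε) (hδ : 0 < δ) (hμ : μ < 1) (hα : α = Real.log (1 / δ) / ((1 - μ) * ε) + 1)
    (hQ : 0 ≤ Q) (h : P ≤ Real.exp ((α - 1) / α * (μ * ε)) * Q ^ (1 / β)) :
    P ≤ Real.exp ε * Q + δ := by
  have hα0 := hαβ.pos
  have hβ0 := hαβ.symm.pos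
  have hsum := hαβ.inv_add_inv_eq_one
  have hα1 : 0 < α⁻¹ := inv_pos.2 hα0
  have hβ1 : 0 < β⁻¹ := inv_pos.2 hβ0
  have hlog : Real.log δ = -((α - 1) * ((1 - μ) * ε)) := by
    have : (1 - μ) * ε ≠ 0 := (mul_pos (by linarith) hε).ne'
    rw [hα, add_sub_cancel_right, div_mul_cancel₀ _ this, one_div, Real.log_inv, neg_neg]
  have hδe : δ ^ α⁻¹ = Real.exp (-((α - 1) / α * ((1 - μ) * ε))) := by
    rw [Real.rpow_def_of_pos hδ, hlog]
    congr 1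
    ring
  have hβα : β⁻¹ = (α - 1) / α := by
    field_simp at hsum ⊢
    linarith
  have hAM := Real.geom_mean_le_arith_mean2_weighted hβ1.le hα1.le
    (mul_nonneg (Real.exp_pos ε).le hQ) hδ.le (by linarith)
  rw [Real.mul_rpow (Real.exp_pos ε).le hQ, hδe, ← Real.exp_mul] at hAM
  have hE : Real.exp (ε * β⁻¹) * Q ^ β⁻¹ * Real.exp (-((α - 1) / α * ((1 - μ) * ε))) =
      Real.exp ((α - 1) / α * (μ * ε)) * Q ^ (1 / β) := by
    rw [mul_right_comm, ← Real.exp_add, one_div]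
    congr 2
    rw [hβα]
    ring
  rw [hE] at hAM
  have h1 : β⁻¹ * (Real.exp ε * Q) ≤ Real.exp ε * Q :=
    mul_le_of_le_one_left (mul_nonneg (Real.exp_pos ε).le hQ) (by linarith)
  have h2 : α⁻¹ * δ ≤ δ := mul_le_of_le_one_left hδ.le (by linarith)
  linarith

end Conversion

section Step

theorem norm_gradient_le_of_lipschitzWith {E : Type*} [NormedAddCommGroup E]
    [InnerProductSpace ℝ E] [CompleteSpace E] {f : E → ℝ} {C : ℝ≥0} (hf : LipschitzWith C f)
    (x : E) : ‖gradient f x‖ ≤ C := by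
  rw [gradient, LinearIsometryEquiv.norm_map]
  exact norm_fderiv_le_of_lipschitz ℝ hf

theorem measurable_gradient {E : Type*} [NormedAddCommGroup E] [InnerProductSpace ℝ E]
    [CompleteSpace E] [MeasurableSpace E] [BorelSpace E] (f : E → ℝ) :
    Measurable (gradient f) :=
  (InnerProductSpace.toDual ℝ E).symm.continuous.measurable.comp (measurable_fderiv ℝ f)

instance (n : ℕ) : DiscreteMeasurableSpace (Finset (Fin n)) := ⟨fun _ => trivial⟩

theorem HasGaussianShift.lintegral_subsampled_le {E : Type*} [NormedAddCommGroup E]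
    [InnerProductSpace ℝ E] [MeasurableSpace E] [BorelSpace E] [SecondCountableTopology E]
    {N : Measure E}
    [IsProbabilityMeasure N] {v : ℝ} (hN : HasGaussianShift N v) (hv : 0 < v) {n b : ℕ}
    (hb : 1 ≤ b) (hbn : b < n) {g g' : Fin n → E} {i₀ : Fin n} {G x α β : ℝ}
    (hg : ∀ i, ‖g i‖ ≤ G) (hg' : ∀ i, ‖g' i‖ ≤ G) (hgg' : ∀ i, i ≠ i₀ → g i = g' i)
    (hαβ : α.HolderConjugate β) (hx : 0 < x) (hx' : x ≤ 2 / 3)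
    (hγα : (b : ℝ) / n * (5 / 2) * Real.exp α ≤ 1) (hG : ((b : ℝ)⁻¹ * (2 * G)) ^ 2 / v ≤ x)
    {h : E → ℝ≥0∞} (hh : Measurable h) :
    ∫⁻ y, h ((b : ℝ)⁻¹ • (∑ i ∈ y.1, g i) + y.2) ∂(batchMeasure n b).prod N ≤
      ENNReal.ofReal (Real.exp ((α - 1) * (5 * ((b : ℝ) / n) ^ 2 * x))) *
        (∫⁻ y, h ((b : ℝ)⁻¹ • (∑ i ∈ y.1, g' i) + y.2) ^ β ∂(batchMeasure n b).prod N) ^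
          (1 / β) := by
  have hm : ∀ g : Fin n → E, Measurable fun y : Finset (Fin n) × E =>
      h ((b : ℝ)⁻¹ • (∑ i ∈ y.1, g i) + y.2) := fun g =>
    hh.comp (((Measurable.of_discrete (f := fun B : Finset (Fin n) =>
      (b : ℝ)⁻¹ • ∑ i ∈ B, g i)).comp measurable_fst).add measurable_snd)
  rw [lintegral_batchMeasure_prod N (hm g), lintegral_batchMeasure_prod N ((hm g').pow_const β)]
  refine sum_subsample_le hb hbn i₀ hαβ _ _ fun B hi j hj => ?_
  have hn0 : (0 : ℝ) < n := by exact_mod_cast i₀.pos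
  have hb0 : (0 : ℝ) < b := by exact_mod_cast hb
  have hji : j ≠ i₀ := fun h => hi (h ▸ hj)
  have hswap : ∀ g : Fin n → E, ∑ i ∈ insert i₀ (B.erase j), g i = ∑ i ∈ B, g i + (g i₀ - g j) := by
    intro g
    rw [Finset.sum_insert (by simp [hi]), ← Finset.add_sum_erase B g hj]
    abel
  have hB : ∑ i ∈ B, g i = ∑ i ∈ B, g' i :=
    Finset.sum_congr rfl fun i hiB => hgg' i fun h => hi (h ▸ hiB)
  have hbound : ∀ e e' : E, ‖e‖ ≤ G → ‖e'‖ ≤ G → ‖(b : ℝ)⁻¹ • (e - e')‖ ^ 2 / v ≤ x := by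
    intro e e' he he'
    refine le_trans ?_ hG
    rw [norm_smul, Real.norm_of_nonneg (by positivity)]
    gcongr
    exact (norm_sub_le e e').trans (by linarith)
  have key := hN.mixture_le hv (a := (b : ℝ)⁻¹ • ∑ i ∈ B, g i)
    (c := (b : ℝ)⁻¹ • ∑ i ∈ insert i₀ (B.erase j), g i)
    (c' := (b : ℝ)⁻¹ • ∑ i ∈ insert i₀ (B.erase j), g' i) hαβ (div_pos hb0 hn0)
    (by rw [div_lt_one hn0]; exact_mod_cast hbn) hx hx' hγα
    (by rw [← smul_sub, hswap, add_sub_cancel_left]; exact hbound _ _ (hg _) (hg _))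
    (by rw [← smul_sub, hswap, ← hB, add_sub_cancel_left]; exact hbound _ _ (hg' _) (hg' _))
    (by rw [← smul_sub, hswap, hswap, ← hB, hgg' j hji, add_sub_add_left_eq_sub,
          sub_sub_sub_cancel_right]; exact hbound _ _ (hg _) (hg' _)) hh
  simpa only [add_comm, hB] using key

theorem measurable_step {d n : ℕ} (f : Fin n → EuclideanSpace ℝ (Fin d) → ℝ) (η b : ℝ)
    (A : Matrix (Fin d) (Fin d) ℝ) :
    Measurable fun p : EuclideanSpace ℝ (Fin d) × Finset (Fin n) × EuclideanSpace ℝ (Fin d) =>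
      p.1 - η • Matrix.toEuclideanLin A
        (b⁻¹ • (∑ i ∈ p.2.1, gradient (f i) p.1) + p.2.2) := by
  have hA : Measurable (Matrix.toEuclideanLin A) :=
    (Matrix.toEuclideanLin A).continuous_of_finiteDimensional.measurable
  have hsum : Measurable fun p : EuclideanSpace ℝ (Fin d) × Finset (Fin n) ×
      EuclideanSpace ℝ (Fin d) => ∑ i ∈ p.2.1, gradient (f i) p.1 := by
    have : ∀ p : EuclideanSpace ℝ (Fin d) × Finset (Fin n) × EuclideanSpace ℝ (Fin d),
        ∑ i ∈ p.2.1, gradient (f i) p.1 =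
          ∑ i, if i ∈ p.2.1 then gradient (f i) p.1 else 0 := fun p => by
      rw [Finset.sum_ite_mem, Finset.univ_inter]
    simp_rw [this]
    refine Finset.measurable_sum _ fun i _ => Measurable.ite ?_
      ((measurable_gradient (f i)).comp measurable_fst) measurable_const
    exact (measurable_fst.comp measurable_snd) (MeasurableSet.of_discrete (s := {B | i ∈ B}))
  exact measurable_fst.sub
    ((hA.comp ((hsum.const_smul b⁻¹).add (measurable_snd.comp measurable_snd))).const_smul η)

end Step

/-- Privacy guarantee of DP-LSSGD: with per-coordinate Gaussian noise variance
`ν² = 20TαG²/(μn²ε)`, where `α = log(1/δ)/((1-μ)ε) + 1` satisfies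
`α ≤ log(μn³ε/(5b³Tα + μbn²ε))` and `5b²Tα/(μn²ε) ≥ 3/2`, the final iterate of `T`
steps of DP-LSSGD is `(ε, δ)`-differentially private with respect to changing one of
the `G`-Lipschitz component functions. -/
theorem dp_lssgd_privacy
    (σ : ℝ) (hσ : 0 ≤ σ) (d n b T : ℕ) (hd : 3 ≤ d) (hn : 1 ≤ n) (hb : 1 ≤ b)
    (hbn : b ≤ n) (hT : 1 ≤ T)
    (G ε δ μ : ℝ) (hG : 0 < G) (hε : 0 < ε) (hδ : 0 < δ) (hμ : μ ∈ Set.Ioo (0 : ℝ) 1)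
    (α : ℝ) (hα : α = Real.log (1 / δ) / ((1 - μ) * ε) + 1)
    (hα₁ : α ≤ Real.log (μ * n ^ 3 * ε / (5 * b ^ 3 * T * α + μ * b * n ^ 2 * ε)))
    (hα₂ : 5 * b ^ 2 * T * α / (μ * n ^ 2 * ε) ≥ 3 / 2)
    (ν : ℝ) (hν : ν ^ 2 = 20 * T * α * G ^ 2 / (μ * n ^ 2 * ε))
    (f f' : Fin n → EuclideanSpace ℝ (Fin d) → ℝ)
    (hflip : ∀ i, LipschitzWith (Real.toNNReal G) (f i))
    (hf'lip : ∀ i, LipschitzWith (Real.toNNReal G) (f' i))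
    (hfdiff : ∀ i, Differentiable ℝ (f i))
    (hf'diff : ∀ i, Differentiable ℝ (f' i))
    (hneighbor : ∃ i₀ : Fin n, ∀ i : Fin n, i ≠ i₀ → f i = f' i)
    (w₀ : EuclideanSpace ℝ (Fin d)) (η : ℕ → ℝ)
    (w w' : ℕ → (Fin T → Finset (Fin n) × EuclideanSpace ℝ (Fin d)) →
      EuclideanSpace ℝ (Fin d))
    (hw0 : ∀ ω, w 0 ω = w₀) (hw'0 : ∀ ω, w' 0 ω = w₀)
    (hwrec : ∀ (k : Fin T) ω,
      w (k.val + 1) ω = w k.val ω - η k.val •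
        (Matrix.toEuclideanLin (lapMat σ d)⁻¹)
          ((b : ℝ)⁻¹ • (∑ i ∈ (ω k).1, gradient (f i) (w k.val ω)) + (ω k).2))
    (hw'rec : ∀ (k : Fin T) ω,
      w' (k.val + 1) ω = w' k.val ω - η k.val •
        (Matrix.toEuclideanLin (lapMat σ d)⁻¹)
          ((b : ℝ)⁻¹ • (∑ i ∈ (ω k).1, gradient (f' i) (w' k.val ω)) + (ω k).2)) :
    ∀ O : Set (EuclideanSpace ℝ (Fin d)), MeasurableSet O →
      (Measure.pi fun _ : Fin T => (batchMeasure n b).prod (noiseMeasure d ν))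
          {ω | w T ω ∈ O}
        ≤ ENNReal.ofReal (Real.exp ε) *
            (Measure.pi fun _ : Fin T => (batchMeasure n b).prod (noiseMeasure d ν))
              {ω | w' T ω ∈ O}
          + ENNReal.ofReal δ := by
  intro O hO
  obtain ⟨i₀, hi₀⟩ := hneighbor
  have := isProbabilityMeasure_batchMeasure hbn
  set m := Measure.pi fun _ : Fin T => (batchMeasure n b).prod (noiseMeasure d ν)
  rcases le_or_gt 1 δ with hδ1 | hδ1
  · exact prob_le_one.trans (le_add_left (ENNReal.one_le_ofReal.2 hδ1))
  obtain ⟨hμ0, hμ1⟩ := hμ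
  have hn0 : (0 : ℝ) < n := by exact_mod_cast hn
  have hb0 : (0 : ℝ) < b := by exact_mod_cast hb
  have hT0 : (0 : ℝ) < T := by exact_mod_cast hT
  have hμε : 0 < (1 - μ) * ε := mul_pos (by linarith) hε
  have hα1 : 1 < α := by
    have := div_pos (Real.log_pos (one_lt_one_div hδ hδ1)) hμε
    linarith
  have hα0 : 0 < α := by linarith
  set s := 5 * b ^ 2 * T * α / (μ * n ^ 2 * ε) with hs
  have hs0 : 0 < s := by linarith
  have hγs : (b : ℝ) / n * (s + 1) * Real.exp α ≤ 1 := by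
    rw [Real.le_log_iff_exp_le (by positivity)] at hα₁
    have h1 := mul_le_mul_of_nonneg_left hα₁ (by positivity : 0 ≤ (b : ℝ) / n * (s + 1))
    refine h1.trans_eq ?_
    rw [hs]
    field_simp
  have hγα : (b : ℝ) / n * (5 / 2) * Real.exp α ≤ 1 := by
    refine le_trans ?_ hγs
    gcongr
    linarith
  have hbn' : b < n := by
    have h1 : 1 ≤ Real.exp α := Real.one_le_exp hα0.le
    have h2 : (b : ℝ) / n < 1 := by nlinarith [div_pos hb0 hn0]
    rw [div_lt_one hn0] at h2
    exact_mod_cast h2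
  have hν0 : 0 < ν ^ 2 := by rw [hν]; positivity
  have hαβ := Real.HolderConjugate.conjExponent hα1
  set β := α.conjExponent
  have hβ0 : 0 < β := hαβ.symm.pos
  have hxs : 1 / s ≤ 2 / 3 := by
    rw [div_le_div_iff₀ hs0 (by norm_num)]
    linarith
  have hGs : ((b : ℝ)⁻¹ * (2 * G)) ^ 2 / ν ^ 2 ≤ 1 / s := by
    rw [hν, hs]
    refine le_of_eq ?_
    field_simp
    norm_num
  have hgrad : ∀ {φ : EuclideanSpace ℝ (Fin d) → ℝ}, LipschitzWith (Real.toNNReal G) φ →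
      ∀ e, ‖gradient φ e‖ ≤ G := fun hφ e =>
    (norm_gradient_le_of_lipschitzWith hφ e).trans_eq (Real.coe_toNNReal _ hG.le)
  set K := ENNReal.ofReal (Real.exp ((α - 1) * (5 * ((b : ℝ) / n) ^ 2 * (1 / s))))
  have hA : Continuous (Matrix.toEuclideanLin (lapMat σ d)⁻¹) :=
    (Matrix.toEuclideanLin (lapMat σ d)⁻¹).continuous_of_finiteDimensional
  let Φ (φ : Fin n → EuclideanSpace ℝ (Fin d) → ℝ) (k : Fin T) (e : EuclideanSpace ℝ (Fin d))
      (y : Finset (Fin n) × EuclideanSpace ℝ (Fin d)) : EuclideanSpace ℝ (Fin d) :=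
    e - η k.val • Matrix.toEuclideanLin (lapMat σ d)⁻¹
      ((b : ℝ)⁻¹ • (∑ i ∈ y.1, gradient (φ i) e) + y.2)
  have hΦ : ∀ φ k, Measurable (Function.uncurry (Φ φ k)) := fun φ k =>
    measurable_step φ (η k.val) b (lapMat σ d)⁻¹
  have hmain := lintegral_iterate_le (M := (batchMeasure n b).prod (noiseMeasure d ν))
    (Φ := Φ f) (Φ' := Φ f') (hΦ f) (hΦ f') hw0 hw'0 hwrec hw'rec hβ0 (K := K)
    (fun k e h hh => (hasGaussianShift_noiseMeasure d hν0).lintegral_subsampled_le hν0 hb hbn'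
      (h := fun z => h (e - η k.val • Matrix.toEuclideanLin (lapMat σ d)⁻¹ z))
      (fun i => hgrad (hflip i) e) (fun i => hgrad (hf'lip i) e)
      (fun i hi => by rw [hi₀ i hi]) hαβ (one_div_pos.2 hs0) hxs hγα hGs
      (hh.comp (by fun_prop : Measurable fun z =>
        e - η k.val • Matrix.toEuclideanLin (lapMat σ d)⁻¹ z)))
    le_rfl (measurable_const.indicator hO : Measurable (O.indicator fun _ => (1 : ℝ≥0∞)))
  have hpow : ∀ e, (O.indicator (fun _ => (1 : ℝ≥0∞)) e) ^ β = O.indicator (fun _ => 1) e := by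
    intro e
    by_cases he : e ∈ O <;> simp [he, hβ0]
  have hind : ∀ {u : (Fin T → Finset (Fin n) × EuclideanSpace ℝ (Fin d)) →
      EuclideanSpace ℝ (Fin d)}, Measurable u →
      ∫⁻ ω, O.indicator (fun _ => (1 : ℝ≥0∞)) (u ω) ∂m = m {ω | u ω ∈ O} := by
    intro u hu
    exact lintegral_indicator_one (hu hO)
  simp_rw [hpow] at hmain
  rw [hind (measurable_iterate (Φ := Φ f) (hΦ f) hw0 hwrec le_rfl),
    hind (measurable_iterate (Φ := Φ f') (hΦ f') hw'0 hw'rec le_rfl)] at hmain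
  have hKT : K ^ T = ENNReal.ofReal (Real.exp ((α - 1) / α * (μ * ε))) := by
    rw [← ENNReal.ofReal_pow (Real.exp_pos _).le, ← Real.exp_nat_mul, hs]
    congr 2
    field_simp
  set P := m {ω | w T ω ∈ O}
  set Q := m {ω | w' T ω ∈ O}
  have hP : P = ENNReal.ofReal P.toReal := (ENNReal.ofReal_toReal (measure_ne_top _ _)).symm
  have hQ : Q = ENNReal.ofReal Q.toReal := (ENNReal.ofReal_toReal (measure_ne_top _ _)).symm
  have hQ0 := Q.toReal_nonneg
  have hβ1 : 0 ≤ 1 / β := by positivity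
  rw [hKT, hP, hQ, ENNReal.ofReal_rpow_of_nonneg hQ0 hβ1,
    ← ENNReal.ofReal_mul (Real.exp_pos _).le,
    ENNReal.ofReal_le_ofReal_iff (by positivity)] at hmain
  rw [hP, hQ, ← ENNReal.ofReal_mul (Real.exp_pos _).le, ← ENNReal.ofReal_add (by positivity) hδ.le]
  exact ENNReal.ofReal_le_ofReal (le_exp_mul_add_of_le_rpow hαβ hε hδ hμ1 hα hQ0 hmain)
end
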